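/- Slanted Cylinder Lemma: Let Y = (y,s) ∈ ℝ^{n+1} with s > 0, let r > 0, and suppose K⁻¹ r |y| ≤ s ≤ K r² for some constant K > 1. Let u ∈ C^{2,1} on the closure of the slanted cylinder V_r(Y) satisfy −u_t + Lu ≥ 0 at every point of V_r(Y), and suppose u ≤ 0 on D_r := B_r(0) × {0}. Then u(Y) ≤ β₂ · sup_{V_r(Y)} u₊, where u₊ := max(u,0) and β₂ < 1 is a positive constant depending only on ν, n, K and S. -/

import Mathlib

open MeasureTheory ENNReal Metric Set RealInnerProductSpace

noncomputable section

/-- `n`-dimensional Euclidean space. -/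
abbrev En (n : ℕ) : Type := EuclideanSpace ℝ (Fin n)

variable {n : ℕ}

/-- Time derivative `u_t`. -/
def Dt (u : En n × ℝ → ℝ) (X : En n × ℝ) : ℝ :=
  deriv (fun t => u (X.1, t)) X.2

/-- First spatial derivative `D_i u`. -/
def Dx (u : En n × ℝ → ℝ) (i : Fin n) (X : En n × ℝ) : ℝ :=
  fderiv ℝ (fun x => u (x, X.2)) X.1 (EuclideanSpace.single i 1)

/-- Second spatial derivative `D_{ij} u`. -/
def Dxx (u : En n × ℝ → ℝ) (i j : Fin n) (X : En n × ℝ) : ℝ :=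
  Dx (Dx u j) i X

/-- `u` is of class `C^{2,1}` on `Q`: `u`, `D_i u`, `D_{ij} u`, `u_t` exist and are
continuous on `Q`. -/
structure IsC21 (u : En n × ℝ → ℝ) (Q : Set (En n × ℝ)) : Prop where
  cont : ContinuousOn u Q
  diff_t : ∀ X ∈ Q, DifferentiableAt ℝ (fun t => u (X.1, t)) X.2
  diff_x : ∀ X ∈ Q, DifferentiableAt ℝ (fun x => u (x, X.2)) X.1
  diff_xx : ∀ j : Fin n, ∀ X ∈ Q, DifferentiableAt ℝ (fun x => Dx u j (x, X.2)) X.1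
  cont_t : ContinuousOn (Dt u) Q
  cont_x : ∀ i, ContinuousOn (Dx u i) Q
  cont_xx : ∀ i j, ContinuousOn (Dxx u i j) Q

/-- Uniform parabolicity with constant `ν` on `Q`:
`ν⁻¹|ξ|² ≤ Σ a_ij ξ_i ξ_j` and `Σ a_ij² ≤ ν²`. -/
def UnifParabolic (ν : ℝ) (a : En n × ℝ → Matrix (Fin n) (Fin n) ℝ)
    (Q : Set (En n × ℝ)) : Prop :=
  ∀ X ∈ Q, (∀ ξ : Fin n → ℝ, ν⁻¹ * (∑ i, ξ i ^ 2) ≤ ∑ i, ∑ j, a X i j * ξ i * ξ j) ∧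
    (∑ i, ∑ j, (a X i j) ^ 2) ≤ ν ^ 2

/-- `Lu = Σ_{ij} a_ij D_ij u + Σ_i b_i D_i u`. -/
def Lop (a : En n × ℝ → Matrix (Fin n) (Fin n) ℝ) (b : En n × ℝ → En n)
    (u : En n × ℝ → ℝ) (X : En n × ℝ) : ℝ :=
  (∑ i, ∑ j, a X i j * Dxx u i j X) + ∑ i, b X i * Dx u i X

/-- `∫ (ess sup_t |f(x,t)|)ⁿ dx`, the `n`-th power of the `L^n_x L^∞_t` norm of `f`
over the set `Q ⊆ ℝⁿ × ℝ`. -/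
def LxnLtinfPow {E : Type*} [NNNorm E] (f : En n × ℝ → E) (Q : Set (En n × ℝ)) : ℝ≥0∞ :=
  ∫⁻ x, (essSup (fun t => (‖f (x, t)‖₊ : ℝ≥0∞)) (volume.restrict {t | (x, t) ∈ Q})) ^ n

/-- The `L^n_x L^∞_t` norm of `f` over `Q`. -/
def LxnLtinf {E : Type*} [NNNorm E] (f : En n × ℝ → E) (Q : Set (En n × ℝ)) : ℝ≥0∞ :=
  (LxnLtinfPow f Q) ^ (1 / (n : ℝ))

/-- The box `B_ρ(y) × (t₁, t₂)`. -/
def box (y : En n) (ρ t₁ t₂ : ℝ) : Set (En n × ℝ) := ball y ρ ×ˢ Ioo t₁ t₂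

/-- The standard parabolic cylinder `Q_r(Y) = B_r(y) × (s - r², s)`. -/
def pcyl (Y : En n × ℝ) (r : ℝ) : Set (En n × ℝ) := box Y.1 r (Y.2 - r ^ 2) Y.2

/-- The slanted cylinder `V_r(Y) = {(x,t) : |x - (t/s)y| < r, 0 < t < s}`. -/
def slantCyl (Y : En n × ℝ) (r : ℝ) : Set (En n × ℝ) :=
  {X | ‖X.1 - (X.2 / Y.2) • Y.1‖ < r ∧ 0 < X.2 ∧ X.2 < Y.2}

/-- Supremum of the positive part `u₊` over a set `A`. -/
def supPos (u : En n × ℝ → ℝ) (A : Set (En n × ℝ)) : ℝ :=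
  sSup ((fun X => max (u X) 0) '' A)

/-- `Ω` is a Lipschitz domain with character `(rΩ, mΩ)`: at every boundary point `y`
there is a coordinate frame, encoded by the unit "vertical" direction `e`, in which
`Ω ∩ B_{rΩ}(y)` is the region above the graph of an `mΩ`-Lipschitz function `φ`
of the tangential variables. -/
def IsLipschitzDomain (Ω : Set (En n)) (rΩ mΩ : ℝ) : Prop :=
  0 < rΩ ∧ 0 ≤ mΩ ∧
  ∀ y ∈ frontier Ω, ∃ (e : En n) (φ : En n → ℝ),
    ‖e‖ = 1 ∧ LipschitzWith (Real.toNNReal mΩ) φ ∧ φ 0 = 0 ∧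
    (∀ x, x ∈ Ω ∩ ball y rΩ ↔
      dist x y < rΩ ∧ φ ((x - y) - ⟪x - y, e⟫ • e) < ⟪x - y, e⟫) ∧
    (∀ ρ : ℝ, 0 < ρ → ρ ≤ rΩ → y + ρ • e ∈ Ω)

section Helpers

open Filter Topology
set_option maxSynthPendingDepth 3

theorem vol_lip_image (n : ℕ) (K : NNReal) (f : En n → En n) (s : Set (En n))
    (h : LipschitzOnWith K f s) :
    volume (f '' s) ≤ (K : ℝ≥0∞) ^ n * volume s := by
  have h1 := h.hausdorffMeasure_image_le (d := (n : ℝ)) (by positivity)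
  have h2 : (volume : Measure (En n)) = (volume : Measure (En n)).addHaarScalarFactor
      (Measure.hausdorffMeasure (n : ℝ)) • (Measure.hausdorffMeasure (n : ℝ) : Measure (En n)) := by
    have := isAddHaarMeasure_hausdorffMeasure (E := En n)
    simp only [finrank_euclideanSpace, Fintype.card_fin] at this
    exact Measure.isAddLeftInvariant_eq_smul _ _
  rw [h2]
  simp only [Measure.smul_apply]
  rw [ENNReal.smul_def, smul_eq_mul, ENNReal.smul_def, smul_eq_mul]
  rw [ENNReal.rpow_natCast] at h1
  calc _ ≤ _ := mul_le_mul_right h1 _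
    _ = _ := by ring

/-- Area-type estimate for a relation which is locally Lipschitz with constant `k`. -/
theorem area_bound (n : ℕ) (R : Set (En n × En n)) (k : En n → ℝ)
    (hE : IsCompact (Prod.fst '' R)) (hk : ContinuousOn k (Prod.fst '' R))
    (hk0 : ∀ x ∈ Prod.fst '' R, 0 ≤ k x)
    (hL : ∀ η > 0, ∃ d > 0, ∀ q₀ ∈ R, ∀ q₁ ∈ R, dist q₁.1 q₀.1 ≤ d →
      dist q₁.2 q₀.2 ≤ (k q₀.1 + η) * dist q₁.1 q₀.1) :
    volume (Prod.snd '' R) ≤ ∫⁻ x in Prod.fst '' R, (ENNReal.ofReal (k x)) ^ n := by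
  classical
  set E := Prod.fst '' R with hEdef
  -- selection
  have hsel : ∀ x : En n, ∃ p : En n, x ∈ E → (x, p) ∈ R := by
    intro x
    by_cases hx : x ∈ E
    · obtain ⟨q, hq, rfl⟩ := hx
      exact ⟨q.2, fun _ => hq⟩
    · exact ⟨0, fun h => absurd h hx⟩
  choose P hP using hsel
  have hsnd : Prod.snd '' R ⊆ P '' E := by
    rintro _ ⟨q, hq, rfl⟩
    refine ⟨q.1, ⟨q, hq, rfl⟩, ?_⟩
    obtain ⟨d, hd, H⟩ := hL 1 one_pos
    have := H q hq (q.1, P q.1) (hP q.1 ⟨q, hq, rfl⟩) (by simpa using hd.le)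
    simp only [dist_self, mul_zero] at this
    exact dist_le_zero.1 this
  refine (measure_mono hsnd).trans ?_
  -- main estimate with error
  have main : ∀ η : ℝ, 0 < η → volume (P '' E) ≤ ∫⁻ x in E, (ENNReal.ofReal (k x + 2 * η)) ^ n := by
    intro η hη
    obtain ⟨d, hd, H⟩ := hL η hη
    obtain ⟨d', hd', H'⟩ := Metric.uniformContinuousOn_iff.1
      (hE.uniformContinuousOn_of_continuous hk) η hη
    set d₀ := min d d' with hd0
    have hd0p : 0 < d₀ := lt_min hd hd'
    -- countable partition
    obtain ⟨t, ht⟩ : ∃ t : ℕ → En n, DenseRange t := ⟨_, TopologicalSpace.denseRange_denseSeq _⟩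
    let B : ℕ → Set (En n) := fun i => ball (t i) (d₀ / 2)
    let D : ℕ → Set (En n) := disjointed B
    have hDm : ∀ i, MeasurableSet (D i) :=
      fun i => MeasurableSet.disjointed (fun j => measurableSet_ball) i
    have hDU : ⋃ i, D i = univ := by
      rw [iUnion_disjointed]
      refine eq_univ_of_forall fun x => ?_
      obtain ⟨i, hi⟩ := ht.exists_dist_lt x (half_pos hd0p)
      exact mem_iUnion.2 ⟨i, hi⟩
    have hDd : Pairwise (fun i j => Disjoint (D i) (D j)) := disjoint_disjointed B
    have hEU : E = ⋃ i, E ∩ D i := by rw [← inter_iUnion, hDU, inter_univ]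
    have hpiece : ∀ i, volume (P '' (E ∩ D i)) ≤
        ∫⁻ x in E ∩ D i, (ENNReal.ofReal (k x + 2 * η)) ^ n := by
      intro i
      by_cases hne : (E ∩ D i).Nonempty
      swap
      · rw [not_nonempty_iff_eq_empty.1 hne]; simp
      obtain ⟨z, hz⟩ := hne
      have hdist : ∀ x ∈ E ∩ D i, ∀ x' ∈ E ∩ D i, dist x x' < d₀ := by
        intro x hx x' hx'
        have h1 : x ∈ B i := disjointed_subset B i hx.2
        have h2 : x' ∈ B i := disjointed_subset B i hx'.2
        have := dist_triangle_right x x' (t i)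
        have h1' : dist x (t i) < d₀ / 2 := h1
        have h2' : dist x' (t i) < d₀ / 2 := h2
        linarith
      have hosc : ∀ x ∈ E ∩ D i, ∀ x' ∈ E ∩ D i, k x ≤ k x' + η := by
        intro x hx x' hx'
        have := H' x hx.1 x' hx'.1 ((hdist x hx x' hx').trans_le (min_le_right _ _))
        rw [Real.dist_eq] at this
        linarith [abs_lt.1 this]
      -- best constant : inf of k + 2η over piece is approximated via sup of k + η
      set c : ℝ := sSup (k '' (E ∩ D i)) + η with hc
      have hbdd : BddAbove (k '' (E ∩ D i)) := by
        refine ⟨k z + η, ?_⟩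
        rintro _ ⟨x, hx, rfl⟩
        exact hosc x hx z hz
      have hcle : ∀ x ∈ E ∩ D i, k x + η ≤ c := by
        intro x hx
        have := le_csSup hbdd ⟨x, hx, rfl⟩
        linarith
      have hcle' : ∀ x ∈ E ∩ D i, c ≤ k x + 2 * η := by
        intro x hx
        have : sSup (k '' (E ∩ D i)) ≤ k x + η := by
          apply csSup_le (Set.Nonempty.image k ⟨z, hz⟩)
          rintro _ ⟨x', hx', rfl⟩
          exact hosc x' hx' x hx
        linarith
      have hc0 : 0 ≤ c := by have := hcle z hz; have := hk0 z hz.1; linarith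
      have hlip : LipschitzOnWith (Real.toNNReal c) P (E ∩ D i) := by
        apply LipschitzOnWith.of_dist_le_mul
        intro x hx x' hx'
        have h1 := H (x', P x') (hP x' hx'.1) (x, P x) (hP x hx.1)
          ((hdist x hx x' hx').le.trans (min_le_left _ _))
        simp only at h1
        refine h1.trans ?_
        rw [Real.coe_toNNReal _ hc0]
        exact mul_le_mul_of_nonneg_right (hcle x' hx') dist_nonneg
      refine (vol_lip_image n _ P _ hlip).trans ?_
      rw [← setLIntegral_const]
      apply setLIntegral_mono' (hE.isClosed.measurableSet.inter (hDm i))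
      intro x hx
      gcongr
      exact ENNReal.ofReal_le_ofReal (hcle' x hx)
    calc volume (P '' E) = volume (⋃ i, P '' (E ∩ D i)) := by
            rw [← image_iUnion, ← hEU]
      _ ≤ ∑' i, volume (P '' (E ∩ D i)) := measure_iUnion_le _
      _ ≤ ∑' i, ∫⁻ x in E ∩ D i, (ENNReal.ofReal (k x + 2 * η)) ^ n :=
          ENNReal.tsum_le_tsum hpiece
      _ = ∫⁻ x in ⋃ i, E ∩ D i, (ENNReal.ofReal (k x + 2 * η)) ^ n := by
          rw [lintegral_iUnion (fun i => hE.isClosed.measurableSet.inter (hDm i))]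
          intro i j hij
          exact (hDd hij).mono inter_subset_right inter_subset_right
      _ = _ := by rw [← hEU]
  -- limit
  obtain ⟨M, hM⟩ : ∃ M, ∀ x ∈ E, k x ≤ M := by
    obtain ⟨M, hM⟩ := hE.bddAbove_image hk
    exact ⟨M, fun x hx => hM ⟨x, hx, rfl⟩⟩
  have hlim : Tendsto (fun j : ℕ => ∫⁻ x in E, (ENNReal.ofReal (k x + 2 * (1 / ((j : ℝ) + 1)))) ^ n)
      atTop (𝓝 (∫⁻ x in E, (ENNReal.ofReal (k x)) ^ n)) := by
    have hkm : AEMeasurable k (volume.restrict E) := hk.aemeasurable hE.isClosed.measurableSet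
    apply tendsto_lintegral_of_dominated_convergence' (fun _ => (ENNReal.ofReal (M + 2)) ^ n)
    · intro j
      fun_prop
    · intro j
      refine (ae_restrict_iff' hE.isClosed.measurableSet).2 (Eventually.of_forall fun x hx => ?_)
      · refine pow_le_pow_left' (ENNReal.ofReal_le_ofReal ?_) n
        have h3 := hM x hx
        have : (1 : ℝ) / ((j : ℝ) + 1) ≤ 1 := by
          rw [div_le_one (by positivity)]; linarith [(Nat.cast_nonneg j : (0:ℝ) ≤ j)]
        linarith
    · rw [setLIntegral_const]
      exact ENNReal.mul_ne_top (by finiteness) hE.measure_lt_top.ne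
    · refine Eventually.of_forall fun x => ?_
      apply ENNReal.Tendsto.pow
      apply ENNReal.tendsto_ofReal
      have := (tendsto_one_div_add_atTop_nhds_zero_nat (𝕜 := ℝ)).const_mul 2 |>.const_add (k x)
      simpa using this
  exact ge_of_tendsto' hlim fun j => main _ (by positivity)

/-- Admissible diffusion matrices. -/
def Adm (ν : ℝ) (a : Matrix (Fin n) (Fin n) ℝ) : Prop :=
  (∀ ξ : Fin n → ℝ, ν⁻¹ * (∑ i, ξ i ^ 2) ≤ ∑ i, ∑ j, a i j * ξ i * ξ j) ∧
    (∑ i, ∑ j, (a i j) ^ 2) ≤ ν ^ 2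

/-- Contraction of a matrix with a bilinear form. -/
def trA (a : Matrix (Fin n) (Fin n) ℝ) (H : En n →L[ℝ] En n →L[ℝ] ℝ) : ℝ :=
  ∑ i, ∑ j, a i j * H (EuclideanSpace.single i 1) (EuclideanSpace.single j 1)

/-- Closed cylinder. -/
def ccyl (x₀ : En n) (R t₀ t₁ : ℝ) : Set (En n × ℝ) := closedBall x₀ R ×ˢ Icc t₀ t₁

/-- Functions which are twice continuously differentiable in space, with derivative data. -/
structure C2D (w : En n × ℝ → ℝ) (g : En n × ℝ → En n →L[ℝ] ℝ)
    (H : En n × ℝ → En n →L[ℝ] En n →L[ℝ] ℝ) (wt : En n × ℝ → ℝ) (Q : Set (En n × ℝ)) : Prop where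
  cont : ContinuousOn w Q
  hg : ∀ X ∈ Q, HasFDerivAt (fun x => w (x, X.2)) (g X) X.1
  hH : ∀ X ∈ Q, HasFDerivAt (fun x => g (x, X.2)) (H X) X.1
  Hcont : ContinuousOn H Q
  Hsymm : ∀ X ∈ Q, ∀ ξ ζ, H X ξ ζ = H X ζ ξ
  ht : ∀ X ∈ Q, HasDerivAt (fun t => w (X.1, t)) (wt X) X.2

theorem C2D.sub {w g H wt w' g' H' wt'} {Q : Set (En n × ℝ)} (h : C2D w g H wt Q)
    (h' : C2D w' g' H' wt' Q) : C2D (w - w') (g - g') (H - H') (wt - wt') Q where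
  cont := h.cont.sub h'.cont
  hg X hX := (h.hg X hX).sub (h'.hg X hX)
  hH X hX := (h.hH X hX).sub (h'.hH X hX)
  Hcont := h.Hcont.sub h'.Hcont
  Hsymm X hX ξ ζ := by simp [h.Hsymm X hX ξ ζ, h'.Hsymm X hX ξ ζ]
  ht X hX := (h.ht X hX).sub (h'.ht X hX)

theorem bilin_expand (B : En n →L[ℝ] En n →L[ℝ] ℝ) (ξ ζ : En n) :
    B ξ ζ = ∑ i, ∑ j, ξ i * ζ j * B (EuclideanSpace.single i 1) (EuclideanSpace.single j 1) := by
  have h : ∀ v : En n, v = ∑ i, v i • EuclideanSpace.single i (1 : ℝ) := by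
    intro v
    have := (EuclideanSpace.basisFun (Fin n) ℝ).sum_repr v
    simpa using this.symm
  conv_lhs => rw [h ξ, h ζ]
  simp only [map_sum, sum_apply, map_smul, smul_apply,
    smul_eq_mul, Finset.mul_sum]
  rw [Finset.sum_comm]
  refine Finset.sum_congr rfl fun i _ => Finset.sum_congr rfl fun j _ => by ring

/-- A nonnegative symmetric form is bounded by its contraction with an elliptic matrix. -/
theorem psd_bound {ν : ℝ} (hν : 0 < ν) {a : Matrix (Fin n) (Fin n) ℝ} (ha : Adm ν a)
    (B : En n →L[ℝ] En n →L[ℝ] ℝ) (hs : ∀ ξ ζ, B ξ ζ = B ζ ξ) (hB : ∀ ξ, 0 ≤ B ξ ξ) (ξ : En n) :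
    B ξ ξ ≤ ν * trA a B * ‖ξ‖ ^ 2 := by
  let N : Matrix (Fin n) (Fin n) ℝ := fun i j =>
    B (EuclideanSpace.single i 1) (EuclideanSpace.single j 1)
  have hN : N.PosSemidef := by
    refine Matrix.PosSemidef.of_dotProduct_mulVec_nonneg ?_ ?_
    · ext i j
      exact hs _ _
    · intro x
      have := hB (WithLp.toLp 2 x)
      rw [bilin_expand] at this
      simp only [dotProduct, Matrix.mulVec, Finset.mul_sum, N, star_trivial]
      refine this.trans (le_of_eq ?_)
      refine Finset.sum_congr rfl fun i _ => Finset.sum_congr rfl fun j _ => ?_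
      simp only [Pi.star_apply, star_trivial]
      ring
  obtain ⟨M, C, hC⟩ := (Matrix.posSemidef_iff_eq_sum_vecMulVec).1 hN
  have hNC : ∀ i j, B (EuclideanSpace.single i 1) (EuclideanSpace.single j 1)
      = ∑ k, C k i * C k j := by
    intro i j
    have : N i j = (∑ i, Matrix.vecMulVec (C i) (star (C i))) i j := by rw [hC]
    simpa [Matrix.sum_apply, Matrix.vecMulVec_apply, N] using this
  have h1 : ν⁻¹ * ∑ k, ∑ i, C k i ^ 2 ≤ trA a B := by
    unfold trA
    simp only [hNC]
    calc ν⁻¹ * ∑ k, ∑ i, C k i ^ 2 = ∑ k, ν⁻¹ * ∑ i, C k i ^ 2 := by rw [Finset.mul_sum]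
      _ ≤ ∑ k, ∑ i, ∑ j, a i j * C k i * C k j := Finset.sum_le_sum fun k _ => ha.1 (C k)
      _ = _ := by
        rw [Finset.sum_comm]
        refine Finset.sum_congr rfl fun i _ => ?_
        rw [Finset.sum_comm]
        refine Finset.sum_congr rfl fun j _ => ?_
        rw [Finset.mul_sum]
        refine Finset.sum_congr rfl fun k _ => by ring
  have h2 : B ξ ξ = ∑ k, (∑ i, C k i * ξ i) ^ 2 := by
    rw [bilin_expand]
    simp only [hNC, sq, Finset.sum_mul_sum, Finset.mul_sum]
    rw [Finset.sum_congr rfl fun i _ => Finset.sum_comm, Finset.sum_comm]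
    refine Finset.sum_congr rfl fun k _ => Finset.sum_congr rfl fun i _ => ?_
    rw [Finset.sum_mul]
    exact Finset.sum_congr rfl fun j _ => by ring
  have h3 : B ξ ξ ≤ (∑ k, ∑ i, C k i ^ 2) * ‖ξ‖ ^ 2 := by
    rw [h2, Finset.sum_mul]
    refine Finset.sum_le_sum fun k _ => ?_
    rw [EuclideanSpace.norm_sq_eq]
    simp only [Real.norm_eq_abs, sq_abs]
    exact Finset.sum_mul_sq_le_sq_mul_sq _ _ _
  refine h3.trans ?_
  gcongr
  rw [inv_mul_le_iff₀ hν] at h1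
  exact h1

/-- Uniform second order Taylor lower bound. -/
theorem C2D.taylor {w g H wt} {x₀ : En n} {R t₀ t₁ : ℝ} (h : C2D w g H wt (ccyl x₀ R t₀ t₁))
    {η : ℝ} (hη : 0 < η) : ∃ d > 0, ∀ x z t, (x, t) ∈ ccyl x₀ R t₀ t₁ → (z, t) ∈ ccyl x₀ R t₀ t₁ →
      dist z x ≤ d → w (x, t) + g (x, t) (z - x) + 1 / 2 * H (x, t) (z - x) (z - x)
        - 1 / 2 * η * ‖z - x‖ ^ 2 ≤ w (z, t) := by
  have hc : IsCompact (ccyl x₀ R t₀ t₁) := (isCompact_closedBall _ _).prod isCompact_Icc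
  obtain ⟨d, hd, hu⟩ := Metric.uniformContinuousOn_iff.1
    (hc.uniformContinuousOn_of_continuous h.Hcont) η hη
  refine ⟨d / 2, half_pos hd, fun x z t hx hz hxz => ?_⟩
  set e := z - x with he
  have hseg : ∀ τ ∈ Icc (0:ℝ) 1, (x + τ • e, t) ∈ ccyl x₀ R t₀ t₁ := by
    intro τ hτ
    refine ⟨?_, hx.2⟩
    have := (convex_closedBall x₀ R).add_smul_sub_mem hx.1 hz.1 hτ
    exact this
  have hline : ∀ τ : ℝ, HasDerivAt (fun τ : ℝ => x + τ • e) e τ := by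
    intro τ
    simpa using ((hasDerivAt_id τ).smul_const e).const_add x
  have hd1 : ∀ τ ∈ Icc (0:ℝ) 1, HasDerivAt (fun τ => w (x + τ • e, t)) (g (x + τ • e, t) e) τ :=
    fun τ hτ => HasFDerivAt.comp_hasDerivAt (l := fun z => w (z, t)) τ (h.hg _ (hseg τ hτ)) (hline τ)
  have hd2 : ∀ τ ∈ Icc (0:ℝ) 1, HasDerivAt (fun τ => g (x + τ • e, t) e)
      (H (x + τ • e, t) e e) τ := by
    intro τ hτ
    have h1 : HasDerivAt (fun τ => g (x + τ • e, t)) (H (x + τ • e, t) e) τ :=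
      HasFDerivAt.comp_hasDerivAt (l := fun z => g (z, t)) τ (h.hH _ (hseg τ hτ)) (hline τ)
    have := ((ContinuousLinearMap.apply ℝ ℝ e).hasFDerivAt).comp_hasDerivAt τ h1
    exact this
  set L := H (x, t) e e - η * ‖e‖ ^ 2 with hLd
  have hlow : ∀ τ ∈ Icc (0:ℝ) 1, L ≤ H (x + τ • e, t) e e := by
    intro τ hτ
    have hdist : dist (x + τ • e, t) (x, t) < d := by
      rw [Prod.dist_eq, dist_self, max_lt_iff]
      refine ⟨?_, hd⟩
      rw [dist_eq_norm, add_sub_cancel_left, norm_smul, Real.norm_eq_abs, abs_of_nonneg hτ.1]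
      rw [dist_eq_norm] at hxz
      calc τ * ‖e‖ ≤ 1 * (d / 2) := mul_le_mul hτ.2 hxz (norm_nonneg _) zero_le_one
        _ < d := by linarith
    have h1 := hu _ (hseg τ hτ) _ hx hdist
    rw [dist_eq_norm] at h1
    have h2 : |(H (x + τ • e, t) - H (x, t)) e e| ≤ η * ‖e‖ ^ 2 := by
      rw [← Real.norm_eq_abs]
      calc _ ≤ ‖(H (x + τ • e, t) - H (x, t))‖ * ‖e‖ * ‖e‖ :=
            ContinuousLinearMap.le_opNorm₂ _ _ _
        _ ≤ η * ‖e‖ * ‖e‖ := by gcongr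
        _ = _ := by ring
    have h3 := (abs_le.1 h2).1
    simp only [sub_apply] at h3
    rw [hLd]; linarith
  -- first integration
  have hmono1 : ∀ τ ∈ Icc (0:ℝ) 1, g (x, t) e + L * τ ≤ g (x + τ • e, t) e := by
    have hm : MonotoneOn (fun τ : ℝ => g (x + τ • e, t) e - L * τ) (Icc 0 1) := by
      apply monotoneOn_of_hasDerivWithinAt_nonneg (convex_Icc 0 1)
        (f' := fun τ => H (x + τ • e, t) e e - L * 1)
      · intro τ hτ
        exact ((hd2 τ hτ).continuousAt.continuousWithinAt).sub (by fun_prop)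
      · intro τ hτ
        rw [interior_Icc] at hτ
        exact ((hd2 τ ⟨hτ.1.le, hτ.2.le⟩).sub ((hasDerivAt_id τ).const_mul L)).hasDerivWithinAt
      · intro τ hτ
        rw [interior_Icc] at hτ
        have := hlow τ ⟨hτ.1.le, hτ.2.le⟩
        linarith
    intro τ hτ
    have := hm ⟨le_rfl, zero_le_one⟩ hτ hτ.1
    simp only [zero_smul, add_zero, mul_zero, sub_zero] at this
    linarith
  have hmono2 : MonotoneOn (fun τ : ℝ => w (x + τ • e, t) - (g (x, t) e * τ + L * τ ^ 2 / 2))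
      (Icc 0 1) := by
    apply monotoneOn_of_hasDerivWithinAt_nonneg (convex_Icc 0 1)
      (f' := fun τ => g (x + τ • e, t) e - (g (x, t) e * 1 + L * (2 * τ) / 2))
    · intro τ hτ
      exact ((hd1 τ hτ).continuousAt.continuousWithinAt).sub (by fun_prop)
    · intro τ hτ
      rw [interior_Icc] at hτ
      have h2 : HasDerivAt (fun τ : ℝ => τ ^ 2) (2 * τ) τ := by
        simpa using hasDerivAt_pow 2 τ
      exact ((hd1 τ ⟨hτ.1.le, hτ.2.le⟩).sub (((hasDerivAt_id τ).const_mul _).add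
        ((h2.const_mul L).div_const 2))).hasDerivWithinAt
    · intro τ hτ
      rw [interior_Icc] at hτ
      have := hmono1 τ ⟨hτ.1.le, hτ.2.le⟩
      linarith
  have := hmono2 ⟨le_rfl, zero_le_one⟩ ⟨zero_le_one, le_rfl⟩ zero_le_one
  simp only [zero_smul, add_zero, mul_zero, sub_zero, one_smul, he, add_sub_cancel] at this
  rw [← he] at this
  rw [hLd] at this
  norm_num at this
  linarith

/-- `(x,t)` is a contact point of the plane with slope `p`. -/
def Ctc (w : En n × ℝ → ℝ) (Q : Set (En n × ℝ)) (σ : ℝ) (x : En n) (t : ℝ) (p : En n) : Prop :=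
  ‖p‖ ≤ σ ∧ (x, t) ∈ Q ∧ ∀ z ∈ Q, w z - inner ℝ p z.1 ≤ w (x, t) - inner ℝ p x

/-- The contact relation. -/
def CRel (w : En n × ℝ → ℝ) (Q : Set (En n × ℝ)) (σ : ℝ) : Set (En n × En n) :=
  {q | ∃ t, Ctc w Q σ q.1 t q.2}

theorem isCompact_ccyl (x₀ : En n) (R t₀ t₁ : ℝ) : IsCompact (ccyl x₀ R t₀ t₁) :=
  (isCompact_closedBall _ _).prod isCompact_Icc

theorem CRel_compact {w : En n × ℝ → ℝ} {Q : Set (En n × ℝ)} {σ : ℝ} (hQ : IsCompact Q)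
    (hw : ContinuousOn w Q) : IsCompact (CRel w Q σ) := by
  let B : Set ((En n × ℝ) × En n) := Q ×ˢ closedBall 0 σ
  have hB : IsCompact B := hQ.prod (isCompact_closedBall _ _)
  let T : Set ((En n × ℝ) × En n) :=
    B ∩ ⋂ z ∈ Q, {q ∈ B | w z - inner ℝ q.2 z.1 ≤ w q.1 - inner ℝ q.2 q.1.1}
  have hT : IsCompact T := by
    refine hB.inter_right ?_
    refine isClosed_biInter fun z hz => ?_
    refine hB.isClosed.isClosed_le (by fun_prop) ?_
    refine ContinuousOn.sub (hw.comp (by fun_prop) fun q hq => hq.1) (by fun_prop)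
  have : CRel w Q σ = (fun q : (En n × ℝ) × En n => (q.1.1, q.2)) '' T := by
    ext ⟨x, p⟩
    constructor
    · rintro ⟨t, h1, h2, h3⟩
      have hb : ((x, t), p) ∈ B := ⟨h2, by simpa using h1⟩
      refine ⟨((x, t), p), ⟨hb, ?_⟩, rfl⟩
      simp only [mem_iInter]
      exact fun z hz => ⟨hb, h3 z hz⟩
    · rintro ⟨⟨⟨x', t⟩, p'⟩, ⟨hb, h⟩, he⟩
      simp only [Prod.mk.injEq] at he
      obtain ⟨rfl, rfl⟩ := he
      simp only [mem_iInter] at h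
      exact ⟨t, by simpa using hb.2, hb.1, fun z hz => (h z hz).2⟩
  rw [this]
  exact hT.image (by fun_prop)

theorem CRel_surj {w : En n × ℝ → ℝ} {Q : Set (En n × ℝ)} {σ : ℝ} (hQ : IsCompact Q)
    (hne : Q.Nonempty) (hw : ContinuousOn w Q) : closedBall 0 σ ⊆ Prod.snd '' CRel w Q σ := by
  intro p hp
  obtain ⟨⟨x, t⟩, hX, hmax⟩ := hQ.exists_isMaxOn hne
    (hw.sub (g := fun z => inner ℝ p z.1) (by fun_prop))
  exact ⟨(x, p), ⟨t, by simpa using hp, hX, fun z hz => hmax hz⟩, rfl⟩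

section contact
variable {w : En n × ℝ → ℝ} {g : En n × ℝ → En n →L[ℝ] ℝ}
  {H : En n × ℝ → En n →L[ℝ] En n →L[ℝ] ℝ} {wt : En n × ℝ → ℝ} {x₀ : En n} {R t₀ t₁ σ : ℝ}

theorem Ctc.grad (h : C2D w g H wt (ccyl x₀ R t₀ t₁)) {x t p}
    (hc : Ctc w (ccyl x₀ R t₀ t₁) σ x t p) (hx : x ∈ ball x₀ R) (ξ : En n) :
    g (x, t) ξ = inner ℝ p ξ := by
  have hmax : IsLocalMax (fun z => w (z, t) - inner ℝ p z) x := by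
    filter_upwards [isOpen_ball.mem_nhds hx] with z hz
    exact hc.2.2 (z, t) ⟨ball_subset_closedBall hz, hc.2.1.2⟩
  have hd : HasFDerivAt (fun z => w (z, t) - inner ℝ p z) (g (x, t) - innerSL ℝ p) x :=
    (h.hg _ hc.2.1).sub (innerSL ℝ p).hasFDerivAt
  have := hmax.hasFDerivAt_eq_zero hd
  have h2 : (g (x, t) - innerSL ℝ p) ξ = 0 := by rw [this]; rfl
  simp only [sub_apply, innerSL_apply_apply] at h2
  linarith

theorem Ctc.time (h : C2D w g H wt (ccyl x₀ R t₀ t₁)) {x t p}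
    (hc : Ctc w (ccyl x₀ R t₀ t₁) σ x t p) (ht : t₀ < t) : 0 ≤ wt (x, t) := by
  have hd := (h.ht _ hc.2.1).hasDerivWithinAt (s := Iio t)
  rw [hasDerivWithinAt_iff_tendsto_slope' (by simp)] at hd
  refine ge_of_tendsto hd ?_
  have : Ioo t₀ t ∈ 𝓝[<] t := Ioo_mem_nhdsLT ht
  filter_upwards [this] with τ hτ
  have h1 := hc.2.2 (x, τ) ⟨hc.2.1.1, hτ.1.le, hτ.2.le.trans hc.2.1.2.2⟩
  simp only [slope_def_field]
  refine div_nonneg_of_nonpos ?_ (by linarith [hτ.2])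
  dsimp only at h1 ⊢
  linarith

theorem Ctc.hess (h : C2D w g H wt (ccyl x₀ R t₀ t₁)) {x t p}
    (hc : Ctc w (ccyl x₀ R t₀ t₁) σ x t p) (hx : x ∈ ball x₀ R) (ξ : En n) :
    H (x, t) ξ ξ ≤ 0 := by
  refine le_of_forall_pos_le_add fun ε hε => ?_
  set η := ε / (‖ξ‖ ^ 2 + 1) with hηd
  have hη : 0 < η := by positivity
  obtain ⟨d, hd, hT⟩ := h.taylor hη
  obtain ⟨ρ, hρ, hρb⟩ := Metric.isOpen_iff.1 isOpen_ball x hx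
  set s := min d (ρ / 2) / (‖ξ‖ + 1) with hs
  have hs0 : 0 < s := by positivity
  have hsn : s * ‖ξ‖ ≤ min d (ρ / 2) := by
    rw [hs, div_mul_eq_mul_div, div_le_iff₀ (by positivity)]
    have : 0 < min d (ρ / 2) := by positivity
    nlinarith
  have hdist : dist (x + s • ξ) x = s * ‖ξ‖ := by
    rw [dist_eq_norm, add_sub_cancel_left, norm_smul, Real.norm_eq_abs, abs_of_pos hs0]
  have hz : (x + s • ξ, t) ∈ ccyl x₀ R t₀ t₁ := by
    refine ⟨ball_subset_closedBall (hρb ?_), hc.2.1.2⟩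
    rw [mem_ball, hdist]
    linarith [min_le_right d (ρ / 2)]
  have h1 := hT x (x + s • ξ) t hc.2.1 hz (by rw [hdist]; exact hsn.trans (min_le_left _ _))
  have h2 := hc.2.2 _ hz
  rw [add_sub_cancel_left, hc.grad h hx] at h1
  simp only [inner_add_right, map_smul, smul_apply, smul_eq_mul, norm_smul,
    Real.norm_eq_abs, abs_of_pos hs0, inner_smul_right] at h1 h2
  have h3 : s ^ 2 * (H (x, t) ξ ξ - η * ‖ξ‖ ^ 2) ≤ 0 := by nlinarith
  have h4 : H (x, t) ξ ξ - η * ‖ξ‖ ^ 2 ≤ 0 := by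
    by_contra hcon
    push Not at hcon
    have : 0 < s ^ 2 * (H (x, t) ξ ξ - η * ‖ξ‖ ^ 2) := by positivity
    linarith
  have h5 : η * ‖ξ‖ ^ 2 ≤ ε := by
    rw [hηd, div_mul_eq_mul_div, div_le_iff₀ (by positivity)]
    nlinarith
  linarith

theorem contact_core (h : C2D w g H wt (ccyl x₀ R t₀ t₁)) (hR : 0 ≤ R) (ht : t₀ ≤ t₁)
    (k : En n → ℝ) (hk : ContinuousOn k (closedBall x₀ R)) (hk0 : ∀ x ∈ closedBall x₀ R, 0 ≤ k x)
    (hIntr : ∀ x t p, Ctc w (ccyl x₀ R t₀ t₁) σ x t p → x ∈ ball x₀ R)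
    (hH : ∀ x t p, Ctc w (ccyl x₀ R t₀ t₁) σ x t p → ∀ ξ, -H (x, t) ξ ξ ≤ k x * ‖ξ‖ ^ 2) :
    volume (closedBall (0 : En n) σ) ≤
      ∫⁻ x in Prod.fst '' CRel w (ccyl x₀ R t₀ t₁) σ, (ENNReal.ofReal (2 * k x)) ^ n := by
  set Q := ccyl x₀ R t₀ t₁ with hQd
  have hQ : IsCompact Q := isCompact_ccyl _ _ _ _
  have hQn : Q.Nonempty := ⟨(x₀, t₀), by simpa using hR, le_rfl, ht⟩
  have hRc : IsCompact (CRel w Q σ) := CRel_compact hQ h.cont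
  have hE : IsCompact (Prod.fst '' CRel w Q σ) := hRc.image continuous_fst
  have hEb : Prod.fst '' CRel w Q σ ⊆ ball x₀ R := by
    rintro _ ⟨⟨x, p⟩, ⟨t, hc⟩, rfl⟩
    exact hIntr _ _ _ hc
  have hEc := hEb.trans ball_subset_closedBall
  refine (measure_mono (CRel_surj hQ hQn h.cont)).trans ?_
  refine area_bound n _ (fun x => 2 * k x) hE ?_ ?_ ?_
  · exact (hk.mono hEc).const_smul (2:ℝ)
  · intro x hx
    have := hk0 x (hEc hx)
    positivity
  intro η hη
  obtain ⟨dT, hdT, hT⟩ := h.taylor (half_pos hη)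
  obtain ⟨ρ, hρ, hρb⟩ := hE.exists_cthickening_subset_open isOpen_ball hEb
  set d := min (dT / 2) ρ with hd
  have hd0 : 0 < d := by positivity
  refine ⟨d, hd0, ?_⟩
  rintro ⟨x0, p0⟩ ⟨s0, hc0⟩ ⟨x1, p1⟩ ⟨s1, hc1⟩ hdist
  dsimp only at hc0 hc1 hdist ⊢
  have hx0 := hIntr _ _ _ hc0
  have hx1 := hIntr _ _ _ hc1
  have hkx := hk0 x0 (ball_subset_closedBall hx0)
  have main : ∀ d', 0 < d' → dist x1 x0 ≤ d' → d' ≤ d → dist p1 p0 ≤ (2 * k x0 + η) * d' := by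
    intro d' hd'0 hd'1 hd'2
    rcases eq_or_ne p1 p0 with rfl | hne
    · rw [dist_self]; positivity
    have hN : 0 < ‖p0 - p1‖ := by rw [norm_pos_iff, sub_ne_zero]; exact hne.symm
    set e : En n := ‖p0 - p1‖⁻¹ • (p0 - p1) with he
    have he1 : ‖e‖ = 1 := by
      rw [he, norm_smul, norm_inv, norm_norm, inv_mul_cancel₀ hN.ne']
    have hpe : inner ℝ p0 e - inner ℝ p1 e = ‖p0 - p1‖ := by
      rw [← inner_sub_left, he, inner_smul_right, real_inner_self_eq_norm_sq]
      field_simp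
    have hz1 : dist (x1 + d' • e) x1 = d' := by
      rw [dist_eq_norm, add_sub_cancel_left, norm_smul, he1, Real.norm_eq_abs, abs_of_pos hd'0,
        mul_one]
    have hz0 : dist (x1 + d' • e) x0 ≤ 2 * d' := by
      linarith [dist_triangle (x1 + d' • e) x1 x0]
    have hz : (x1 + d' • e, s0) ∈ Q := by
      refine ⟨ball_subset_closedBall (hρb ?_), hc0.2.1.2⟩
      refine mem_cthickening_of_dist_le _ x1 _ _ ⟨(x1, p1), ⟨s1, hc1⟩, rfl⟩ ?_
      rw [hz1]; exact hd'2.trans (min_le_right _ _)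
    have h1 := hT x0 _ s0 hc0.2.1 hz (by linarith [min_le_left (dT / 2) ρ])
    have h2 := hc1.2.2 _ hz
    have h3 := hc0.2.2 _ hc1.2.1
    have h4 := hH _ _ _ hc0 (x1 + d' • e - x0)
    rw [hc0.grad h hx0] at h1
    have h5 : ‖x1 + d' • e - x0‖ ^ 2 ≤ 4 * d' ^ 2 := by
      rw [dist_eq_norm] at hz0
      nlinarith [norm_nonneg (x1 + d' • e - x0)]
    simp only [inner_add_right, inner_sub_right, inner_smul_right] at h1 h2 h3
    have h6 : (k x0 + η / 2) * ‖x1 + d' • e - x0‖ ^ 2 ≤ (k x0 + η / 2) * (4 * d' ^ 2) := by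
      gcongr
    have h7 : d' * ‖p0 - p1‖ ≤ d' * ((2 * k x0 + η) * d') := by
      rw [← hpe]; nlinarith
    rw [dist_comm, dist_eq_norm]
    exact le_of_mul_le_mul_left h7 hd'0
  rcases (dist_nonneg (x := x1) (y := x0)).eq_or_lt with h0 | h0
  · by_contra hcon
    push Not at hcon
    rw [← h0, mul_zero] at hcon
    have hq : 0 < 2 * k x0 + η := by positivity
    have := main (min d (dist p1 p0 / (2 * (2 * k x0 + η)))) (by positivity)
      (by rw [← h0]; positivity) (min_le_left _ _)
    have h8 : (2 * k x0 + η) * min d (dist p1 p0 / (2 * (2 * k x0 + η))) ≤ dist p1 p0 / 2 := by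
      calc _ ≤ (2 * k x0 + η) * (dist p1 p0 / (2 * (2 * k x0 + η))) := by
            gcongr; exact min_le_right _ _
        _ = _ := by field_simp
    linarith
  · exact main _ h0 le_rfl hdist

end contact

/-- Nonnegative supersolutions with continuous drift bound. -/
structure SS (ν : ℝ) (v : En n × ℝ → ℝ) (g : En n × ℝ → En n →L[ℝ] ℝ)
    (H : En n × ℝ → En n →L[ℝ] En n →L[ℝ] ℝ) (vt : En n × ℝ → ℝ) (m : En n → ℝ)
    (x₀ : En n) (R t₀ t₁ : ℝ) : Prop where
  c2 : C2D v g H vt (ccyl x₀ R t₀ t₁)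
  nonneg : ∀ X ∈ ccyl x₀ R t₀ t₁, 0 ≤ v X
  m_cont : ContinuousOn m (closedBall x₀ R)
  m_nonneg : ∀ x ∈ closedBall x₀ R, 0 ≤ m x
  ineq : ∀ X ∈ ccyl x₀ R t₀ t₁, ∃ a : Matrix (Fin n) (Fin n) ℝ, Adm ν a ∧
    trA a (H X) - m X.1 * ‖g X‖ ≤ vt X

theorem trA_sub (a : Matrix (Fin n) (Fin n) ℝ) (H H' : En n →L[ℝ] En n →L[ℝ] ℝ) :
    trA a (H - H') = trA a H - trA a H' := by
  simp only [trA, sub_apply, mul_sub, Finset.sum_sub_distrib]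

theorem contact_super {ν : ℝ} (hν : 0 < ν) {v g H vt m} {x₀ : En n} {R t₀ t₁ : ℝ}
    (hS : SS ν v g H vt m x₀ R t₀ t₁) (hR : 0 ≤ R) (ht01 : t₀ ≤ t₁)
    {φ gφ Hφ φt} (hφ : C2D φ gφ Hφ φt (ccyl x₀ R t₀ t₁)) {σ L : ℝ} (hL : 0 ≤ L)
    (hx : ∀ x t p, Ctc (φ - v) (ccyl x₀ R t₀ t₁) σ x t p → x ∈ ball x₀ R)
    (ht : ∀ x t p, Ctc (φ - v) (ccyl x₀ R t₀ t₁) σ x t p → t₀ < t)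
    (hsub : ∀ x t p, Ctc (φ - v) (ccyl x₀ R t₀ t₁) σ x t p → ∀ a, Adm ν a →
      φt (x, t) ≤ trA a (Hφ (x, t)))
    (hg : ∀ x t p, Ctc (φ - v) (ccyl x₀ R t₀ t₁) σ x t p → ‖gφ (x, t)‖ + σ ≤ L) :
    volume (closedBall (0 : En n) σ) ≤ ENNReal.ofReal (2 * ν * L) ^ n *
      ∫⁻ x in Prod.fst '' CRel (φ - v) (ccyl x₀ R t₀ t₁) σ, (ENNReal.ofReal (m x)) ^ n := by
  have hw := hφ.sub hS.c2
  have := contact_core hw hR ht01 (fun x => ν * L * m x) (hS.m_cont.const_smul (ν * L))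
    (fun x hx => mul_nonneg (by positivity) (hS.m_nonneg x hx)) hx (σ := σ) ?_
  · refine this.trans (le_of_eq ?_)
    rw [← lintegral_const_mul' _ _ (by finiteness)]
    congr 1
    ext x
    rw [← mul_pow, ← ENNReal.ofReal_mul (by positivity)]
    congr 2
    ring
  · intro x t p hc ξ
    have hxb := hx _ _ _ hc
    have hXQ := hc.2.1
    obtain ⟨a, ha, hin⟩ := hS.ineq _ hXQ
    have h1 : 0 ≤ φt (x, t) - vt (x, t) := hc.time hw (ht _ _ _ hc)
    have h2 := hsub _ _ _ hc a ha
    have h3 : g (x, t) = gφ (x, t) - innerSL ℝ p := by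
      ext ζ
      have := hc.grad hw hxb ζ
      simp only [Pi.sub_apply, sub_apply] at this
      simp only [sub_apply, innerSL_apply_apply]
      linarith
    have h4 : ‖g (x, t)‖ ≤ L := by
      rw [h3]
      refine (norm_sub_le _ _).trans ?_
      rw [innerSL_apply_norm]
      linarith [hg _ _ _ hc, hc.1]
    have h5 := mul_le_mul_of_nonneg_left h4 (hS.m_nonneg x hXQ.1)
    have h6 : trA a (H (x, t) - Hφ (x, t)) ≤ L * m x := by
      rw [trA_sub]; dsimp only at hin; linarith
    have h7 := psd_bound hν ha (H (x, t) - Hφ (x, t))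
      (fun ξ ζ => by simp only [sub_apply, hS.c2.Hsymm _ hXQ ξ ζ, hφ.Hsymm _ hXQ ξ ζ])
      (fun ζ => by
        have := hc.hess hw hxb ζ
        simp only [Pi.sub_apply, sub_apply] at this ⊢
        linarith) ξ
    have h8 : ν * trA a (H (x, t) - Hφ (x, t)) * ‖ξ‖ ^ 2 ≤ ν * (L * m x) * ‖ξ‖ ^ 2 := by gcongr
    simp only [Pi.sub_apply, sub_apply] at h7 ⊢
    linarith

/-- The inner product as a bilinear map. -/
def ip : En n →L[ℝ] En n →L[ℝ] ℝ := innerSL ℝ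

theorem ip_apply (x y : En n) : ip x y = inner ℝ x y := rfl

theorem ip_norm (x : En n) : ‖ip x‖ = ‖x‖ := innerSL_apply_norm _ _

/-- The radial Hessian. -/
def radH (F1 F2 : ℝ) (x : En n) : En n →L[ℝ] En n →L[ℝ] ℝ :=
  (4 * F2) • (ip x).smulRight (ip x) + (2 * F1) • ip

theorem radH_apply (F1 F2 : ℝ) (x ξ ζ : En n) :
    radH F1 F2 x ξ ζ = 4 * F2 * (inner ℝ x ξ * inner ℝ x ζ) + 2 * F1 * inner ℝ ξ ζ := by
  simp [radH, ip_apply]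

theorem radial_C2D {F F1 F2 Ft : ℝ → ℝ → ℝ} (Q : Set (En n × ℝ))
    (hF : Continuous fun z : ℝ × ℝ => F z.1 z.2) (hF1 : Continuous fun z : ℝ × ℝ => F1 z.1 z.2)
    (hF2 : Continuous fun z : ℝ × ℝ => F2 z.1 z.2)
    (h1 : ∀ s t, HasDerivAt (fun s => F s t) (F1 s t) s)
    (h2 : ∀ s t, HasDerivAt (fun s => F1 s t) (F2 s t) s)
    (ht : ∀ s t, HasDerivAt (fun t => F s t) (Ft s t) t) :
    C2D (fun X : En n × ℝ => F (‖X.1‖ ^ 2) X.2)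
      (fun X => (2 * F1 (‖X.1‖ ^ 2) X.2) • ip X.1)
      (fun X => radH (F1 (‖X.1‖ ^ 2) X.2) (F2 (‖X.1‖ ^ 2) X.2) X.1)
      (fun X => Ft (‖X.1‖ ^ 2) X.2) Q where
  cont := by
    have hc : Continuous fun X : En n × ℝ => ((‖X.1‖ ^ 2, X.2) : ℝ × ℝ) := by fun_prop
    exact (hF.comp hc).continuousOn
  hg X hX := by
    have h := (h1 (‖X.1‖ ^ 2) X.2).comp_hasFDerivAt X.1 (hasStrictFDerivAt_norm_sq X.1).hasFDerivAt
    refine h.congr_fderiv ?_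
    ext ξ
    simp [ip_apply]
    ring
  hH X hX := by
    have h := (h2 (‖X.1‖ ^ 2) X.2).comp_hasFDerivAt X.1 (hasStrictFDerivAt_norm_sq X.1).hasFDerivAt
    have h' := (h.const_mul 2).smul (ip (n := n)).hasFDerivAt
    refine h'.congr_fderiv ?_
    ext ξ ζ
    simp [radH_apply, ip_apply]
    ring
  Hcont := by
    have hc : Continuous fun X : En n × ℝ => ((‖X.1‖ ^ 2, X.2) : ℝ × ℝ) := by fun_prop
    have e1 := hF1.comp hc
    have e2 := hF2.comp hc
    simp only [Function.comp_def] at e1 e2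
    have e3 : Continuous fun X : En n × ℝ => (ip X.1).smulRight (ip X.1) := by
      have := ContinuousLinearMap.smulRightL ℝ (En n) (En n →L[ℝ] ℝ)
      have hh : Continuous fun X : En n × ℝ =>
          ContinuousLinearMap.smulRightL ℝ (En n) (En n →L[ℝ] ℝ) (ip X.1) (ip X.1) := by
        fun_prop
      exact hh
    unfold radH
    exact (((e2.const_smul (4:ℝ)).smul e3).add ((e1.const_smul (2:ℝ)).smul continuous_const)).continuousOn
  Hsymm X hX ξ ζ := by
    rw [radH_apply, radH_apply, real_inner_comm ξ ζ]; ring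
  ht X hX := ht (‖X.1‖ ^ 2) X.2

theorem trA_radH (a : Matrix (Fin n) (Fin n) ℝ) (F1 F2 : ℝ) (x : En n) :
    trA a (radH F1 F2 x) = 4 * F2 * (∑ i, ∑ j, a i j * x i * x j) + 2 * F1 * ∑ i, a i i := by
  simp only [trA, radH_apply, mul_add, Finset.sum_add_distrib]
  congr 1
  · simp only [Finset.mul_sum]
    refine Finset.sum_congr rfl fun i _ => Finset.sum_congr rfl fun j _ => ?_
    simp [EuclideanSpace.inner_single_right]
    ring
  · rw [Finset.mul_sum]
    refine Finset.sum_congr rfl fun i _ => ?_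
    rw [Finset.sum_eq_single i]
    · simp [EuclideanSpace.inner_single_right]; ring
    · intro j _ hj
      simp [EuclideanSpace.inner_single_right, hj]
    · simp

theorem Adm.quad {ν : ℝ} {a : Matrix (Fin n) (Fin n) ℝ} (ha : Adm ν a) (x : En n) :
    ν⁻¹ * ‖x‖ ^ 2 ≤ ∑ i, ∑ j, a i j * x i * x j := by
  have := ha.1 x
  rw [EuclideanSpace.norm_sq_eq]
  simpa using this

theorem Adm.tr_nonneg {ν : ℝ} (hν : 0 < ν) {a : Matrix (Fin n) (Fin n) ℝ} (ha : Adm ν a) :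
    0 ≤ ∑ i, a i i := by
  refine Finset.sum_nonneg fun i _ => ?_
  have := ha.1 (Pi.single i 1)
  simp only [Pi.single_apply] at this
  simp at this
  exact le_trans (by positivity) this

theorem Adm.tr_le {ν : ℝ} (hν : 0 < ν) {a : Matrix (Fin n) (Fin n) ℝ} (ha : Adm ν a) :
    ∑ i, a i i ≤ n * ν := by
  have : ∑ i, a i i ≤ ∑ i : Fin n, ν := by
    refine Finset.sum_le_sum fun i _ => ?_
    refine abs_le_of_sq_le_sq' ?_ hν.le |>.2
    refine le_trans ?_ ha.2
    refine le_trans ?_ (Finset.single_le_sum (f := fun i => ∑ j, a i j ^ 2)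
      (fun i _ => Finset.sum_nonneg fun j _ => sq_nonneg _) (Finset.mem_univ i))
    exact Finset.single_le_sum (f := fun j => a i j ^ 2) (fun j _ => sq_nonneg _) (Finset.mem_univ i)
  simpa using this

theorem Ctc.lower {w : En n × ℝ → ℝ} {x₀ : En n} {R t₀ t₁ σ : ℝ} {x : En n} {t : ℝ} {p : En n}
    (hc : Ctc w (ccyl x₀ R t₀ t₁) σ x t p) {z : En n × ℝ} (hz : z ∈ ccyl x₀ R t₀ t₁) :
    w z - σ * (2 * R) ≤ w (x, t) := by
  have h1 := hc.2.2 z hz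
  have h2 : |inner ℝ p (z.1 - x)| ≤ ‖p‖ * ‖z.1 - x‖ := abs_real_inner_le_norm _ _
  have h3 : ‖z.1 - x‖ ≤ 2 * R := by
    rw [← dist_eq_norm]
    have := dist_triangle_right z.1 x x₀
    have e1 := mem_closedBall.1 hz.1
    have e2 := mem_closedBall.1 hc.2.1.1
    dsimp only at e2
    linarith
  have h4 : ‖p‖ * ‖z.1 - x‖ ≤ σ * (2 * R) :=
    mul_le_mul hc.1 h3 (norm_nonneg _) ((norm_nonneg _).trans hc.1)
  rw [inner_sub_right] at h2
  have := (abs_le.1 h2).2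
  linarith

theorem exists_eps {V : ℝ≥0∞} (hV : 0 < V) (hV' : V ≠ ⊤) {C : ℝ} (hC : 0 < C) (n : ℕ) :
    ∃ ε : ℝ, 0 < ε ∧ ENNReal.ofReal C ^ n * ENNReal.ofReal ε < V := by
  have hv : 0 < V.toReal := ENNReal.toReal_pos hV.ne' hV'
  refine ⟨V.toReal / (2 * C ^ n), by positivity, ?_⟩
  rw [← ENNReal.ofReal_pow hC.le, ← ENNReal.ofReal_mul (by positivity)]
  rw [ENNReal.ofReal_lt_iff_lt_toReal (by positivity) hV']
  field_simp
  norm_num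

set_option maxHeartbeats 1000000 in
theorem small_drift (n : ℕ) {ν : ℝ} (hν : 1 ≤ ν) : ∃ ε : ℝ, 0 < ε ∧ ∃ δ : ℝ, 0 < δ ∧ δ ≤ 1 / 2 ∧
    ∀ (v g H vt) (m : En n → ℝ), SS ν v g H vt m 0 1 0 1 →
      (∀ x : En n, ‖x‖ ≤ 1 / 2 → 1 ≤ v (x, 0)) →
      ∫⁻ x in ball (0 : En n) 1, (ENNReal.ofReal (m x)) ^ n ≤ ENNReal.ofReal ε →
      (∀ (x : En n) (t : ℝ), ‖x‖ ≤ 1 / 4 → t ∈ Icc (0:ℝ) 1 → δ ≤ v (x, t)) ∧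
      (∀ x : En n, ‖x‖ ≤ 1 / 2 → δ ≤ v (x, 1)) := by
  have hν0 : 0 < ν := by linarith
  set c : ℝ := 6 * n * ν + 3 / 2 + 24 * ν⁻¹ with hc
  have hc0 : 0 < c := by positivity
  set Λ : ℝ := ν * c ^ 2 / 24 with hΛ
  have hΛ0 : 0 < Λ := by positivity
  set δ : ℝ := Real.exp (-Λ) * (3 / 16) ^ 3 / 2 with hδ
  have hδ0 : 0 < δ := by positivity
  have hδ1 : δ ≤ 1 / 2 := by
    have : Real.exp (-Λ) ≤ 1 := Real.exp_le_one_iff.2 (by linarith)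
    rw [hδ]; nlinarith
  obtain ⟨ε, hε, hεV⟩ := exists_eps (V := volume (closedBall (0 : En n) (δ / 8)))
    (measure_closedBall_pos _ _ (by positivity)) measure_closedBall_lt_top.ne
    (C := 2 * ν * 7) (by positivity) n
  refine ⟨ε, hε, δ, hδ0, hδ1, fun v g H vt m hS hv0 hm => ?_⟩
  have key : ∀ (x : En n) (t : ℝ), ‖x‖ ≤ 1 → t ∈ Icc (0:ℝ) 1 → 3 / 16 ≤ 1 / 4 + t / 2 - ‖x‖ ^ 2 →
      δ ≤ v (x, t) := by
    intro x1 t1 hx1 ht1 hg1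
    by_contra hcon
    push Not at hcon
    let F : ℝ → ℝ → ℝ := fun s t => Real.exp (-Λ * t) * (1 / 4 + t / 2 - s) ^ 3
    let F1 : ℝ → ℝ → ℝ := fun s t => Real.exp (-Λ * t) * (-3 * (1 / 4 + t / 2 - s) ^ 2)
    let F2 : ℝ → ℝ → ℝ := fun s t => Real.exp (-Λ * t) * (6 * (1 / 4 + t / 2 - s))
    let Ft : ℝ → ℝ → ℝ := fun s t => Real.exp (-Λ * t) *
      (3 / 2 * (1 / 4 + t / 2 - s) ^ 2 - Λ * (1 / 4 + t / 2 - s) ^ 3)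
    have hφ := radial_C2D (n := n) (F := F) (F1 := F1) (F2 := F2) (Ft := Ft) (ccyl 0 1 0 1)
      (by fun_prop) (by fun_prop) (by fun_prop)
      (by
        intro s t
        have h := (((hasDerivAt_id s).const_sub (1 / 4 + t / 2)).pow 3).const_mul (Real.exp (-Λ * t))
        refine h.congr_deriv ?_
        simp [F1])
      (by
        intro s t
        have h := ((((hasDerivAt_id s).const_sub (1 / 4 + t / 2)).pow 2).const_mul (-3)).const_mul
          (Real.exp (-Λ * t))
        refine h.congr_deriv ?_
        simp [F2]; ring)
      (by
        intro s t
        have h1 := ((hasDerivAt_id t).const_mul (-Λ)).exp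
        have h2 := ((((hasDerivAt_id t).div_const 2).const_add (1 / 4)).sub_const s).pow 3
        refine (h1.mul h2).congr_deriv ?_
        simp [Ft]; ring)
    set φ : En n × ℝ → ℝ := fun X => F (‖X.1‖ ^ 2) X.2 with hφd
    have hX1 : (x1, t1) ∈ ccyl (0 : En n) 1 0 1 := ⟨by simpa using hx1, ht1⟩
    have hw1 : δ < (φ - v) (x1, t1) := by
      have h1 : Real.exp (-Λ) ≤ Real.exp (-Λ * t1) := Real.exp_le_exp.2 (by nlinarith [ht1.2])
      have h2 : ((3:ℝ) / 16) ^ 3 ≤ (1 / 4 + t1 / 2 - ‖x1‖ ^ 2) ^ 3 := by gcongr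
      have h3 : 2 * δ ≤ φ (x1, t1) := by
        calc 2 * δ = Real.exp (-Λ) * (3 / 16) ^ 3 := by rw [hδ]; ring
          _ ≤ Real.exp (-Λ * t1) * (1 / 4 + t1 / 2 - ‖x1‖ ^ 2) ^ 3 := by gcongr
      simp only [Pi.sub_apply]; linarith
    have hpos : ∀ x t p, Ctc (φ - v) (ccyl 0 1 0 1) (δ / 8) x t p → 
        v (x, t) < φ (x, t) ∧ 0 < 1 / 4 + t / 2 - ‖x‖ ^ 2 := by
      intro x t p hct
      have h1 := hct.lower hX1
      simp only [Pi.sub_apply] at h1 hw1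
      have h2 : v (x, t) < φ (x, t) := by linarith
      refine ⟨h2, ?_⟩
      have h3 := hS.nonneg _ hct.2.1
      have h4 : 0 < Real.exp (-Λ * t) * (1 / 4 + t / 2 - ‖x‖ ^ 2) ^ 3 := h3.trans_lt h2
      have h5 := pos_of_mul_pos_right h4 (Real.exp_pos _).le
      by_contra h6
      push Not at h6
      exact absurd h5 (not_lt.2 (Odd.pow_nonpos (by decide) h6))
    have hin : ∀ x t p, Ctc (φ - v) (ccyl 0 1 0 1) (δ / 8) x t p → x ∈ ball (0 : En n) 1 := by
      intro x t p hct
      have h1 := (hpos x t p hct).2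
      have h2 := hct.2.1.2.2
      rw [mem_ball_zero_iff]
      dsimp only at h2
      nlinarith [norm_nonneg x]
    have := contact_super hν0 hS zero_le_one zero_le_one hφ (σ := δ / 8) (L := 7) (by norm_num) hin
      ?_ ?_ ?_
    · have hsub : Prod.fst '' CRel (φ - v) (ccyl 0 1 0 1) (δ / 8) ⊆ ball (0 : En n) 1 := by
        rintro _ ⟨⟨x, p⟩, ⟨t, hct⟩, rfl⟩
        exact hin _ _ _ hct
      have h1 := (lintegral_mono_set (f := fun x => ENNReal.ofReal (m x) ^ n) hsub).trans hm
      have h2 := this.trans (mul_le_mul_right h1 _)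
      exact absurd h2 (not_le.2 hεV)
    · intro x t p hct
      obtain ⟨h1, h2⟩ := hpos x t p hct
      refine lt_of_le_of_ne hct.2.1.2.1 ?_
      rintro rfl
      have h3 : ‖x‖ ≤ 1 / 2 := by nlinarith [norm_nonneg x]
      have h4 := hv0 x h3
      have h5 : φ (x, 0) ≤ 1 := by
        simp only [hφd, F, mul_zero, Real.exp_zero, one_mul, zero_div, add_zero] at h2 ⊢
        exact pow_le_one₀ h2.le (by nlinarith [sq_nonneg ‖x‖])
      linarith
    · intro x t p hct a ha
      obtain ⟨h1, h2⟩ := hpos x t p hct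
      have ht := hct.2.1.2
      rw [trA_radH]
      set q := 1 / 4 + t / 2 - ‖x‖ ^ 2 with hq
      have hA := ha.quad x
      have hT := ha.tr_le hν0
      set A := ∑ i, ∑ j, a i j * x i * x j
      set T := ∑ i, a i i
      simp only [Ft, F1, F2, ← hq]
      have hx2 : ‖x‖ ^ 2 = 1 / 4 + t / 2 - q := by rw [hq]; ring
      have e1 : ν⁻¹ * (1 / 4 - q) ≤ A := by
        refine le_trans ?_ hA
        rw [hx2]
        have := ht.1
        dsimp only at this
        gcongr
        linarith
      have e2 : 0 ≤ 6 * ν⁻¹ - c * q + Λ * q ^ 2 := by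
        have e3 : 6 * ν⁻¹ - c * q + Λ * q ^ 2 = 6 * ν⁻¹ * (1 - ν * c * q / 12) ^ 2 := by
          rw [hΛ]; field_simp; ring
        rw [e3]
        positivity
      have e4 : 3 / 2 * q ^ 2 - Λ * q ^ 3 ≤ 24 * q * A - 6 * q ^ 2 * T := by
        have f1 : 24 * q * (ν⁻¹ * (1 / 4 - q)) ≤ 24 * q * A := by gcongr
        have f2 : 6 * q ^ 2 * T ≤ 6 * q ^ 2 * (n * ν) := by gcongr
        have f3 := mul_nonneg h2.le e2
        have f4 : q * (6 * ν⁻¹ - c * q + Λ * q ^ 2) = 24 * q * (ν⁻¹ * (1 / 4 - q))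
          - 6 * q ^ 2 * (n * ν) - 3 / 2 * q ^ 2 + Λ * q ^ 3 := by rw [hc]; ring
        linarith
      have e5 := mul_le_mul_of_nonneg_left e4 (Real.exp_pos (-Λ * t)).le
      calc _ ≤ _ := e5
        _ = _ := by ring
    · intro x t p hct
      obtain ⟨h1, h2⟩ := hpos x t p hct
      have ht := hct.2.1.2
      have hx := mem_ball_zero_iff.1 (hin x t p hct)
      dsimp only at ht
      set q := 1 / 4 + t / 2 - ‖x‖ ^ 2 with hq
      rw [norm_smul, ip_norm, Real.norm_eq_abs]
      simp only [F1, ← hq]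
      have e1 : Real.exp (-Λ * t) ≤ 1 := Real.exp_le_one_iff.2 (by nlinarith [ht.1])
      have e0 := Real.exp_pos (-Λ * t)
      have e2 : q ^ 2 ≤ 1 := pow_le_one₀ h2.le (by nlinarith [ht.2, sq_nonneg ‖x‖])
      have e3 : |2 * (Real.exp (-Λ * t) * (-3 * q ^ 2))| = 6 * (Real.exp (-Λ * t) * q ^ 2) := by
        rw [show 2 * (Real.exp (-Λ * t) * (-3 * q ^ 2)) = -(6 * (Real.exp (-Λ * t) * q ^ 2)) by ring,
          abs_neg, abs_of_nonneg (by positivity)]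
      rw [e3]
      have e4 : Real.exp (-Λ * t) * q ^ 2 ≤ 1 := mul_le_one₀ e1 (sq_nonneg _) e2
      have e5 : 6 * (Real.exp (-Λ * t) * q ^ 2) * ‖x‖ ≤ 6 * 1 * 1 := by gcongr
      linarith
  constructor
  · intro x t hx ht
    exact key x t (by linarith) ht (by nlinarith [norm_nonneg x, ht.1])
  · intro x hx
    exact key x 1 (by linarith) ⟨zero_le_one, le_rfl⟩ (by nlinarith [norm_nonneg x])

set_option maxHeartbeats 2000000 in
theorem expand (n : ℕ) {ν ϱ : ℝ} (hν : 1 ≤ ν) (hϱ : 0 < ϱ) (S : ℝ) :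
    ∃ T : ℝ, 0 < T ∧ ∃ η : ℝ, 0 < η ∧ η ≤ 1 / 2 ∧
    ∀ (v g H vt) (m : En n → ℝ), SS ν v g H vt m 0 4 0 T →
      (∀ (x : En n) (t : ℝ), ‖x‖ ≤ ϱ → t ∈ Icc (0:ℝ) T → 1 ≤ v (x, t)) →
      ∫⁻ x in ball (0 : En n) 4, (ENNReal.ofReal (m x)) ^ n ≤ ENNReal.ofReal S →
      (∀ x : En n, ‖x‖ ≤ 3 → η ≤ v (x, T)) := by
  have hν0 : 0 < ν := by linarith
  set N : ℝ := (n:ℝ) + 1 with hN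
  have hN0 : 0 < N := by positivity
  set α : ℝ := N * ν ^ 2 / ϱ ^ 2 with hα
  have hα0 : 0 < α := by positivity
  set e16 : ℝ := Real.exp (-(16 * α)) with he16
  have he0 : 0 < e16 := Real.exp_pos _
  set lam : ℝ := 2 * α * N * ν * e16 with hlam
  have hlam0 : 0 < lam := by positivity
  set φ2 : ℝ := Real.exp (-(9 * α)) - e16 with hφ2
  have hφ20 : 0 < φ2 := by
    rw [hφ2, he16, sub_pos]; exact Real.exp_lt_exp.2 (by linarith)
  have hφ21 : φ2 ≤ 1 := by
    have : Real.exp (-(9 * α)) ≤ 1 := Real.exp_le_one_iff.2 (by linarith)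
    linarith
  set l0 : ℝ := 2 * α * e16 * ϱ with hl0
  have hl00 : 0 < l0 := by positivity
  obtain ⟨σ, hσ0, hσ1, hσ2, hσ3⟩ : ∃ σ : ℝ, 0 < σ ∧ σ ≤ 1 ∧ σ ≤ φ2 / 16 ∧ σ ≤ l0 / 8 :=
    ⟨min 1 (min (φ2 / 16) (l0 / 8)), by positivity, min_le_left _ _,
      (min_le_right _ _).trans (min_le_left _ _), (min_le_right _ _).trans (min_le_right _ _)⟩
  set C1 : ℝ := 8 * α + 1 with hC1
  have hC10 : 0 < C1 := by positivity
  set V1 : ℝ := (volume (ball (0 : En n) 1)).toReal with hV1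
  have hV1e : volume (ball (0 : En n) 1) = ENNReal.ofReal V1 :=
    (ENNReal.ofReal_toReal measure_ball_lt_top.ne).symm
  have hV10 : 0 < V1 := ENNReal.toReal_pos (measure_ball_pos _ _ one_pos).ne' measure_ball_lt_top.ne
  obtain ⟨I, hI⟩ := exists_nat_gt ((2 * ν * C1) ^ n * max S 0 / (σ ^ n * V1))
  set η : ℝ := φ2 * (1 / 2) ^ I / 4 with hη
  have hη0 : 0 < η := by positivity
  have hη1 : η ≤ 1 / 4 := by
    have : (1 / 2 : ℝ) ^ I ≤ 1 := pow_le_one₀ (by norm_num) (by norm_num)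
    have : φ2 * (1 / 2) ^ I ≤ 1 * 1 := by gcongr
    rw [hη]; linarith
  set T : ℝ := Real.log (1 / η) / lam with hT
  have hT0 : 0 < T := by
    rw [hT]; refine div_pos (Real.log_pos ?_) hlam0
    rw [lt_div_iff₀ hη0]; linarith
  have hXT : Real.exp (-lam * T) = η := by
    rw [hT, show -lam * (Real.log (1 / η) / lam) = -Real.log (1 / η) by field_simp,
      one_div, Real.log_inv, neg_neg, Real.exp_log hη0]
  refine ⟨T, hT0, η, hη0, by linarith, fun v g H vt m hS hcore hm x1 hx1 => ?_⟩
  by_contra hcon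
  push Not at hcon
  let Q : Set (En n × ℝ) := ccyl 0 4 0 T
  let F : ℝ → ℝ → ℝ → ℝ := fun h s t => h * (Real.exp (-(α * s)) - e16) - Real.exp (-lam * t)
  let F1 : ℝ → ℝ → ℝ → ℝ := fun h s t => h * (-α * Real.exp (-(α * s)))
  let F2 : ℝ → ℝ → ℝ → ℝ := fun h s t => h * (α ^ 2 * Real.exp (-(α * s)))
  let Ft : ℝ → ℝ → ℝ → ℝ := fun h s t => lam * Real.exp (-lam * t)
  have hexp : ∀ s : ℝ, HasDerivAt (fun s => Real.exp (-(α * s))) (-α * Real.exp (-(α * s))) s := by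
    intro s
    have := (((hasDerivAt_id s).const_mul α).neg).exp
    refine this.congr_deriv ?_
    simp; ring
  have hφ : ∀ h : ℝ, _ := fun h => radial_C2D (n := n) (F := F h) (F1 := F1 h) (F2 := F2 h)
      (Ft := Ft h) Q (by fun_prop) (by fun_prop) (by fun_prop)
      (by
        intro s t
        exact (((hexp s).sub_const e16).const_mul h).sub_const _)
      (by
        intro s t
        refine (((hexp s).const_mul (-α)).const_mul h).congr_deriv ?_
        simp only [F2]; ring)
      (by
        intro s t
        have h1 := (((hasDerivAt_id t).const_mul (-lam)).exp).const_sub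
          (h * (Real.exp (-(α * s)) - e16))
        refine h1.congr_deriv ?_
        simp [Ft]; ring)
  let φ : ℝ → En n × ℝ → ℝ := fun h X => F h (‖X.1‖ ^ 2) X.2
  have hX1 : (x1, T) ∈ Q := ⟨by rw [mem_closedBall_zero_iff]; linarith, hT0.le, le_rfl⟩
  -- facts at contact points
  have fact : ∀ h : ℝ, (1 / 2) ^ I ≤ h → h ≤ 1 → ∀ x t p, Ctc (φ h - v) Q (σ * h) x t p →
      ‖x‖ < 4 ∧ ϱ < ‖x‖ ∧ 0 < t ∧ Real.exp (-lam * t) ≤ h := by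
    intro h hIh hh1 x t p hct
    have hh0 : 0 < h := lt_of_lt_of_le (by positivity) hIh
    have h1 := hct.lower hX1
    have h2 : h * φ2 - η ≤ φ h (x1, T) := by
      simp only [φ, F, hXT]
      have : φ2 ≤ Real.exp (-(α * ‖x1‖ ^ 2)) - e16 := by
        rw [hφ2]
        refine sub_le_sub_right (Real.exp_le_exp.2 ?_) _
        have : ‖x1‖ ^ 2 ≤ 9 := by nlinarith [norm_nonneg x1]
        nlinarith
      gcongr
    have h3 : 2 * η ≤ h * φ2 / 2 := by
      rw [hη]
      nlinarith
    simp only [Pi.sub_apply] at h1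
    have h4 : σ * h * (2 * 4) ≤ h * φ2 / 2 := by nlinarith
    have h5 : v (x, t) < φ h (x, t) := by linarith
    have h6 : v (x, t) < h * (Real.exp (-(α * ‖x‖ ^ 2)) - e16) - Real.exp (-lam * t) := h5
    have h7 := hS.nonneg _ hct.2.1
    have h8 := Real.exp_pos (-lam * t)
    have h9 : Real.exp (-(α * ‖x‖ ^ 2)) ≤ 1 := Real.exp_le_one_iff.2 (by
      have : 0 ≤ α * ‖x‖ ^ 2 := by positivity
      linarith)
    have h10 : h * (Real.exp (-(α * ‖x‖ ^ 2)) - e16) ≤ h := by nlinarith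
    refine ⟨?_, ?_, ?_, by linarith⟩
    · by_contra hx
      push Not at hx
      have : Real.exp (-(α * ‖x‖ ^ 2)) ≤ e16 := by
        rw [he16]; apply Real.exp_le_exp.2
        have : 16 ≤ ‖x‖ ^ 2 := by nlinarith
        nlinarith
      have : h * (Real.exp (-(α * ‖x‖ ^ 2)) - e16) ≤ 0 :=
        mul_nonpos_of_nonneg_of_nonpos hh0.le (by linarith)
      linarith
    · by_contra hx
      push Not at hx
      have := hcore x t hx hct.2.1.2
      linarith
    · refine lt_of_le_of_ne hct.2.1.2.1 ?_
      rintro rfl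
      simp only [mul_zero, Real.exp_zero] at h6
      linarith
  -- measure estimate at each scale
  have scale : ∀ h : ℝ, (1 / 2) ^ I ≤ h → h ≤ 1 →
      ENNReal.ofReal (σ ^ n) * volume (ball (0 : En n) 1) ≤ ENNReal.ofReal ((2 * ν * C1) ^ n) *
        ∫⁻ x in Prod.fst '' CRel (φ h - v) Q (σ * h), (ENNReal.ofReal (m x)) ^ n := by
    intro h hIh hh1
    have hh0 : 0 < h := lt_of_lt_of_le (by positivity) hIh
    have := contact_super hν0 hS (by norm_num) hT0.le (hφ h) (σ := σ * h) (L := h * C1)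
      (by positivity) ?_ ?_ ?_ ?_
    · rw [Measure.addHaar_closedBall _ _ (by positivity), finrank_euclideanSpace_fin,
        show (2 * ν * (h * C1)) = h * (2 * ν * C1) by ring,
        ENNReal.ofReal_mul hh0.le (q := 2 * ν * C1), mul_pow, mul_comm σ h, mul_pow,
        ENNReal.ofReal_mul (by positivity), ← ENNReal.ofReal_pow hh0.le, mul_assoc, mul_assoc,
        mul_left_comm (ENNReal.ofReal (σ ^ n))] at this
      rw [ENNReal.mul_le_mul_iff_right (by rw [← pos_iff_ne_zero, ENNReal.ofReal_pos]; positivity) (by finiteness)] at this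
      rw [ENNReal.ofReal_pow (by positivity)  n (p := 2 * ν * C1), mul_comm σ h]
      exact this
    · intro x t p hct
      rw [mem_ball_zero_iff]
      exact (fact h hIh hh1 x t p hct).1
    · intro x t p hct
      exact (fact h hIh hh1 x t p hct).2.2.1
    · intro x t p hct a ha
      obtain ⟨f1, f2, f3, f4⟩ := fact h hIh hh1 x t p hct
      rw [trA_radH]
      have hA := ha.quad x
      have hTr := ha.tr_le hν0
      set A := ∑ i, ∑ j, a i j * x i * x j
      set Tr := ∑ i, a i i
      simp only [Ft, F1, F2]
      set e := Real.exp (-(α * ‖x‖ ^ 2)) with he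
      have he1 : e16 ≤ e := by
        rw [he, he16]; apply Real.exp_le_exp.2
        have : ‖x‖ ^ 2 ≤ 16 := by nlinarith [norm_nonneg x]
        nlinarith
      have hA2 : N * ν ≤ α * A := by
        have : ν⁻¹ * ϱ ^ 2 ≤ A := le_trans (by gcongr) hA
        calc N * ν = α * (ν⁻¹ * ϱ ^ 2) := by rw [hα]; field_simp
          _ ≤ _ := by gcongr
      have hTr2 : Tr ≤ N * ν := hTr.trans (by rw [hN]; gcongr; linarith)
      have g1 : 2 * (N * ν) ≤ 4 * (α * A) - 2 * Tr := by linarith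
      calc lam * Real.exp (-lam * t) ≤ lam * h := by gcongr
        _ = h * α * e16 * (2 * (N * ν)) := by rw [hlam]; ring
        _ ≤ h * α * e * (2 * (N * ν)) := by gcongr
        _ ≤ h * α * e * (4 * (α * A) - 2 * Tr) := by gcongr
        _ = _ := by ring
    · intro x t p hct
      obtain ⟨f1, f2, f3, f4⟩ := fact h hIh hh1 x t p hct
      rw [norm_smul, ip_norm, Real.norm_eq_abs]
      simp only [F1]
      set e := Real.exp (-(α * ‖x‖ ^ 2)) with he
      have he0' : 0 < e := Real.exp_pos _
      have he1 : e ≤ 1 := Real.exp_le_one_iff.2 (by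
        have : 0 ≤ α * ‖x‖ ^ 2 := by positivity
        linarith)
      rw [show 2 * (h * (-α * e)) = -(2 * h * α * e) by ring, abs_neg, abs_of_nonneg (by positivity)]
      have : 2 * h * α * e * ‖x‖ ≤ 2 * h * α * 1 * 4 := by gcongr
      rw [hC1]
      nlinarith
  -- disjointness
  have disj : ∀ h h' : ℝ, (1 / 2) ^ I ≤ h' → h ≤ 1 → h' ≤ h / 2 →
      Disjoint (Prod.fst '' CRel (φ h - v) Q (σ * h)) (Prod.fst '' CRel (φ h' - v) Q (σ * h')) := by
    intro h h' hIh hh1 hhh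
    have hh'0 : 0 < h' := lt_of_lt_of_le (by positivity) hIh
    have hIh' : (1 / 2) ^ I ≤ h := by linarith
    rw [Set.disjoint_left]
    rintro _ ⟨⟨x, p⟩, ⟨t, hct⟩, rfl⟩ ⟨⟨x', p'⟩, ⟨t', hct'⟩, hxx⟩
    dsimp only at hct hct' hxx
    subst hxx
    have hct2 : Ctc (φ h - v) Q (σ * h) x' t' p := by
      refine ⟨hct.1, hct'.2.1, fun z hz => (hct.2.2 z hz).trans ?_⟩
      have := hct'.2.2 (x', t) hct.2.1
      simp only [Pi.sub_apply, φ, F] at this ⊢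
      linarith
    obtain ⟨f1, f2, f3, f4⟩ := fact h hIh' hh1 _ _ _ hct
    have hxb : x' ∈ ball (0 : En n) 4 := by rw [mem_ball_zero_iff]; exact f1
    have e1 := hct2.grad ((hφ h).sub hS.c2) hxb
    have e2 := hct'.grad ((hφ h').sub hS.c2) hxb
    set e := Real.exp (-(α * ‖x'‖ ^ 2)) with he
    have he1 : e16 ≤ e := by
      rw [he, he16]; apply Real.exp_le_exp.2
      have : ‖x'‖ ^ 2 ≤ 16 := by nlinarith [norm_nonneg x']
      nlinarith
    have e3 : (2 * (h - h') * α * e) • x' = p' - p := by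
      refine ext_inner_right ℝ fun ξ => ?_
      have a1 := e1 ξ
      have a2 := e2 ξ
      simp only [Pi.sub_apply, sub_apply, smul_apply, smul_eq_mul, ip_apply, F1] at a1 a2
      rw [inner_smul_left, inner_sub_left]
      simp only [conj_trivial]
      rw [← he] at a1 a2
      linarith
    have e4 : ‖(2 * (h - h') * α * e) • x'‖ ≤ σ * h + σ * h' := by
      rw [e3]
      exact (norm_sub_le _ _).trans (by linarith [hct.1, hct'.1])
    have hhd : 0 ≤ h - h' := by linarith
    have he0' : 0 < e := Real.exp_pos _
    rw [norm_smul, Real.norm_eq_abs, abs_of_nonneg (by positivity)] at e4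
    have e5 : h / 2 * l0 ≤ 2 * (h - h') * α * e * ‖x'‖ := by
      calc h / 2 * l0 = 2 * (h / 2) * α * e16 * ϱ := by rw [hl0]; ring
        _ ≤ _ := by gcongr; linarith
    have h0 : 0 < h := by linarith
    nlinarith [mul_pos h0 hl00]
  -- summation
  let hh : ℕ → ℝ := fun i => (1 / 2) ^ i
  let E : ℕ → Set (En n) := fun i => Prod.fst '' CRel (φ (hh i) - v) Q (σ * hh i)
  have hhle : ∀ i, hh i ≤ 1 := fun i => pow_le_one₀ (by norm_num) (by norm_num)
  have hhge : ∀ i, i ≤ I → (1 / 2) ^ I ≤ hh i := fun i hi =>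
    pow_le_pow_of_le_one (by norm_num) (by norm_num) hi
  have hEm : ∀ i, MeasurableSet (E i) := fun i =>
    ((CRel_compact (isCompact_ccyl _ _ _ _) ((hφ (hh i)).cont.sub hS.c2.cont)).image
      continuous_fst).measurableSet
  have hdisj : ∀ i j, i < j → j ≤ I → Disjoint (E i) (E j) := by
    intro i j hij hj
    refine disj _ _ (hhge j hj) (hhle i) ?_
    have : hh j ≤ hh (i + 1) := pow_le_pow_of_le_one (by norm_num) (by norm_num) hij
    refine this.trans (le_of_eq ?_)
    simp only [hh, pow_succ]; ring
  have hsum : ∑ i ∈ Finset.range I, ∫⁻ x in E i, (ENNReal.ofReal (m x)) ^ n ≤ ENNReal.ofReal S := by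
    rw [← lintegral_biUnion_finset]
    · refine le_trans (lintegral_mono_set ?_) hm
      refine iUnion₂_subset fun i hi => ?_
      rintro _ ⟨⟨x, p⟩, ⟨t, hct⟩, rfl⟩
      rw [mem_ball_zero_iff]
      exact (fact _ (hhge i (Finset.mem_range.1 hi).le) (hhle i) x t p hct).1
    · intro i hi j hj hij
      simp only [Finset.coe_range, mem_Iio] at hi hj
      rcases lt_or_gt_of_ne hij with h | h
      · exact hdisj i j h hj.le
      · exact (hdisj j i h hi.le).symm
    · intro i _; exact hEm i
  have htot : (I : ℝ≥0∞) * (ENNReal.ofReal (σ ^ n) * volume (ball (0 : En n) 1)) ≤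
      ENNReal.ofReal ((2 * ν * C1) ^ n) * ENNReal.ofReal S := by
    calc (I : ℝ≥0∞) * (ENNReal.ofReal (σ ^ n) * volume (ball (0 : En n) 1))
        = ∑ i ∈ Finset.range I, ENNReal.ofReal (σ ^ n) * volume (ball (0 : En n) 1) := by simp
      _ ≤ ∑ i ∈ Finset.range I, ENNReal.ofReal ((2 * ν * C1) ^ n) *
          ∫⁻ x in E i, (ENNReal.ofReal (m x)) ^ n :=
        Finset.sum_le_sum fun i hi => scale _ (hhge i (Finset.mem_range.1 hi).le) (hhle i)
      _ ≤ _ := by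
        rw [← Finset.mul_sum]
        gcongr
  rw [hV1e, ← ENNReal.ofReal_mul (by positivity), ← ENNReal.ofReal_mul (by positivity),
    ← ENNReal.ofReal_natCast, ← ENNReal.ofReal_mul (by positivity)] at htot
  rw [div_lt_iff₀ (by positivity)] at hI
  have h1 : (2 * ν * C1) ^ n * S ≤ (2 * ν * C1) ^ n * max S 0 := by
    gcongr; exact le_max_left _ _
  have h2 : ENNReal.ofReal ((2 * ν * C1) ^ n * S) < ENNReal.ofReal (I * (σ ^ n * V1)) := by
    have h3 : 0 ≤ (2 * ν * C1) ^ n * max S 0 := by positivity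
    rw [ENNReal.ofReal_lt_ofReal_iff (by linarith)]
    linarith
  exact absurd htot (not_le.2 h2)

theorem trA_smul (a : Matrix (Fin n) (Fin n) ℝ) (c : ℝ) (H : En n →L[ℝ] En n →L[ℝ] ℝ) :
    trA a (c • H) = c * trA a H := by
  simp only [trA, smul_apply, smul_eq_mul, Finset.mul_sum]
  refine Finset.sum_congr rfl fun i _ => Finset.sum_congr rfl fun j _ => by ring

/-- Parabolic scaling. -/
theorem SS.scale {ν : ℝ} {v g H vt} {m : En n → ℝ} {x₀ : En n} {R₀ s₀ s₁ : ℝ}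
    (h : SS ν v g H vt m x₀ R₀ s₀ s₁) {x₁ : En n} {ρ R t₁ T A : ℝ} (hρ : 0 < ρ) (hA : 0 < A)
    (hb : closedBall x₁ (ρ * R) ⊆ closedBall x₀ R₀) (ht0 : s₀ ≤ t₁) (ht1 : t₁ + ρ ^ 2 * T ≤ s₁) :
    ∃ g' H' vt', SS ν (fun X => A⁻¹ * v (x₁ + ρ • X.1, t₁ + ρ ^ 2 * X.2)) g' H' vt'
      (fun x => ρ * m (x₁ + ρ • x)) 0 R 0 T := by
  let f : En n × ℝ → En n × ℝ := fun X => (x₁ + ρ • X.1, t₁ + ρ ^ 2 * X.2)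
  have hfx : ∀ x ∈ closedBall (0 : En n) R, x₁ + ρ • x ∈ closedBall x₀ R₀ := by
    intro x hx
    apply hb
    rw [mem_closedBall, dist_eq_norm, add_sub_cancel_left, norm_smul, Real.norm_eq_abs,
      abs_of_pos hρ]
    rw [mem_closedBall_zero_iff] at hx
    gcongr
  have hf : ∀ X ∈ ccyl (0 : En n) R 0 T, f X ∈ ccyl x₀ R₀ s₀ s₁ := by
    rintro ⟨x, t⟩ ⟨hx, ht⟩
    refine ⟨hfx x hx, ?_, ?_⟩
    · have := ht.1
      have : 0 ≤ ρ ^ 2 * t := by dsimp only at this; positivity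
      dsimp only [f]; linarith
    · have := ht.2
      have : ρ ^ 2 * t ≤ ρ ^ 2 * T := by gcongr
      dsimp only [f]; linarith
  have hfc : Continuous f := by fun_prop
  have hl : ∀ x : En n, HasFDerivAt (fun x => x₁ + ρ • x) (ρ • ContinuousLinearMap.id ℝ (En n)) x :=
    fun x => ((hasFDerivAt_id x).const_smul ρ).const_add x₁
  refine ⟨fun X => (A⁻¹ * ρ) • g (f X), fun X => (A⁻¹ * ρ ^ 2) • H (f X),
    fun X => A⁻¹ * ρ ^ 2 * vt (f X), ⟨⟨?_, ?_, ?_, ?_, ?_, ?_⟩, ?_, ?_, ?_, ?_⟩⟩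
  · exact continuousOn_const.mul (h.c2.cont.comp hfc.continuousOn hf)
  · intro X hX
    have h1 := (h.c2.hg _ (hf X hX))
    have h2 := (HasFDerivAt.comp (g := fun z => v (z, (f X).2)) X.1 h1 (hl X.1)).const_mul A⁻¹
    refine h2.congr_fderiv ?_
    ext ξ
    simp; ring
  · intro X hX
    have h1 := (h.c2.hH _ (hf X hX))
    have h2 := (HasFDerivAt.comp (g := fun z => g (z, (f X).2)) X.1 h1 (hl X.1)).const_smul (A⁻¹ * ρ)
    refine h2.congr_fderiv ?_
    ext ξ ζ
    simp; ring
  · exact (h.c2.Hcont.comp hfc.continuousOn hf).const_smul (A⁻¹ * ρ ^ 2)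
  · intro X hX ξ ζ
    simp only [smul_apply, h.c2.Hsymm _ (hf X hX) ξ ζ]
  · intro X hX
    have h1 := h.c2.ht _ (hf X hX)
    have h0 : HasDerivAt (fun t : ℝ => t₁ + ρ ^ 2 * t) (ρ ^ 2) X.2 := by
      simpa using ((hasDerivAt_id X.2).const_mul (ρ ^ 2)).const_add t₁
    have h2 := (HasDerivAt.comp (h₂ := fun t => v ((f X).1, t)) X.2 h1 h0).const_mul A⁻¹
    refine h2.congr_deriv ?_
    ring
  · intro X hX
    have := h.nonneg _ (hf X hX)
    exact mul_nonneg (by positivity) this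
  · exact continuousOn_const.mul (h.m_cont.comp (by fun_prop) hfx)
  · intro x hx
    exact mul_nonneg hρ.le (h.m_nonneg _ (hfx x hx))
  · intro X hX
    obtain ⟨a, ha, hin⟩ := h.ineq _ (hf X hX)
    refine ⟨a, ha, ?_⟩
    rw [trA_smul, norm_smul, Real.norm_eq_abs, abs_of_pos (by positivity)]
    have := mul_le_mul_of_nonneg_left hin (a := A⁻¹ * ρ ^ 2) (by positivity)
    refine le_trans (le_of_eq ?_) this
    simp only [f]
    ring

theorem scale_lintegral (m : En n → ℝ) (x₁ : En n) {ρ : ℝ} (hρ : 0 < ρ) (R : ℝ) :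
    ∫⁻ x in ball (0 : En n) R, (ENNReal.ofReal (ρ * m (x₁ + ρ • x))) ^ n
      ≤ ∫⁻ x in ball x₁ (ρ * R), (ENNReal.ofReal (m x)) ^ n := by
  have hl : ∀ x ∈ ball (0 : En n) R, HasFDerivWithinAt (fun x => x₁ + ρ • x)
      (ρ • ContinuousLinearMap.id ℝ (En n)) (ball 0 R) x :=
    fun x _ => (((hasFDerivAt_id x).const_smul ρ).const_add x₁).hasFDerivWithinAt
  have hinj : InjOn (fun x : En n => x₁ + ρ • x) (ball 0 R) := by
    intro x _ y _ hxy
    have := add_left_cancel hxy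
    exact smul_right_injective _ hρ.ne' this
  have h := lintegral_image_eq_lintegral_abs_det_fderiv_mul volume measurableSet_ball hl hinj
    (fun x => (ENNReal.ofReal (m x)) ^ n)
  have hdet : (ρ • ContinuousLinearMap.id ℝ (En n)).det = ρ ^ n := by
    simp [ContinuousLinearMap.det]
  rw [hdet, abs_of_pos (by positivity)] at h
  have e : ∀ x : En n, (ENNReal.ofReal (ρ * m (x₁ + ρ • x))) ^ n =
      ENNReal.ofReal (ρ ^ n) * (ENNReal.ofReal (m (x₁ + ρ • x))) ^ n := by
    intro x
    rw [ENNReal.ofReal_mul hρ.le, mul_pow, ENNReal.ofReal_pow hρ.le]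
  simp only [e]
  rw [← h]
  refine lintegral_mono_set ?_
  rintro _ ⟨x, hx, rfl⟩
  rw [mem_ball, dist_eq_norm, add_sub_cancel_left, norm_smul, Real.norm_eq_abs, abs_of_pos hρ]
  rw [mem_ball_zero_iff] at hx
  gcongr

theorem small_drift_iter (n : ℕ) {ν : ℝ} (hν : 1 ≤ ν) : ∃ ε : ℝ, 0 < ε ∧
    ∃ δ : ℝ, 0 < δ ∧ δ ≤ 1 / 2 ∧
    ∀ (k : ℕ) (v g H vt) (m : En n → ℝ), SS ν v g H vt m 0 1 0 k →
      (∀ x : En n, ‖x‖ ≤ 1 / 2 → 1 ≤ v (x, 0)) →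
      ∫⁻ x in ball (0 : En n) 1, (ENNReal.ofReal (m x)) ^ n ≤ ENNReal.ofReal ε →
      (∀ (x : En n) (t : ℝ), ‖x‖ ≤ 1 / 4 → t ∈ Icc (0:ℝ) k → δ ^ k ≤ v (x, t)) := by
  obtain ⟨ε, hε, δ, hδ0, hδ1, hsd⟩ := small_drift n hν
  refine ⟨ε, hε, δ, hδ0, hδ1, fun k v g H vt m hS hv0 hm => ?_⟩
  have step : ∀ j : ℕ, j < k → (∀ x : En n, ‖x‖ ≤ 1 / 2 → δ ^ j ≤ v (x, j)) →
      (∀ (x : En n) (t : ℝ), ‖x‖ ≤ 1 / 4 → t ∈ Icc (j:ℝ) (j + 1) → δ ^ (j + 1) ≤ v (x, t)) ∧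
      (∀ x : En n, ‖x‖ ≤ 1 / 2 → δ ^ (j + 1) ≤ v (x, ((j + 1 : ℕ) : ℝ))) := by
    intro j hj hvj
    have hjk : (j : ℝ) + 1 ≤ k := by exact_mod_cast hj
    obtain ⟨g', H', vt', hS'⟩ := hS.scale (x₁ := 0) (ρ := 1) (R := 1) (t₁ := j) (T := 1)
      (A := δ ^ j) one_pos (by positivity) (by simp) (by positivity) (by linarith)
    have hIntr := (scale_lintegral m 0 one_pos 1).trans (by simpa using hm)
    obtain ⟨r1, r2⟩ := hsd _ _ _ _ _ hS' (by
      intro x hx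
      have := hvj x hx
      simp only [one_smul, zero_add, one_pow, mul_zero, add_zero]
      rw [inv_mul_eq_div, le_div_iff₀ (by positivity), one_mul]
      exact this) hIntr
    simp only [one_smul, zero_add, one_pow, one_mul] at r1 r2
    constructor
    · intro x t hx ht
      have := r1 x (t - j) hx ⟨by linarith [ht.1], by linarith [ht.2]⟩
      rw [inv_mul_eq_div, le_div_iff₀ (by positivity), add_sub_cancel] at this
      rw [pow_succ']; exact this
    · intro x hx
      have := r2 x hx
      rw [inv_mul_eq_div, le_div_iff₀ (by positivity)] at this
      rw [pow_succ']; push_cast; exact this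
  have hall : ∀ j : ℕ, j ≤ k → (∀ x : En n, ‖x‖ ≤ 1 / 2 → δ ^ j ≤ v (x, j)) := by
    intro j
    induction j with
    | zero => intro _ x hx; simpa using hv0 x hx
    | succ j ih => intro hj; exact (step j hj (ih (by omega))).2
  intro x t hx ht
  have hd1 : δ ≤ 1 := by linarith
  rcases ht.2.eq_or_lt with h | h
  · rw [h]; exact hall k le_rfl x (by linarith)
  · have h1 := Nat.floor_le ht.1
    have h2 := Nat.lt_floor_add_one t
    have h3 : ⌊t⌋₊ < k := (Nat.floor_lt ht.1).2 h
    have := (step _ h3 (hall _ h3.le)).1 x t hx ⟨h1, h2.le⟩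
    exact (pow_le_pow_of_le_one hδ0.le hd1 h3).trans this

/-- Among many disjoint balls, one carries little mass. -/
theorem good_ball (n : ℕ) (hn : 0 < n) (m : En n → ℝ) {S ε : ℝ} (hε : 0 < ε) {J : ℕ}
    (hJ0 : 0 < J) (hJ : S < J * ε)
    (hm : ∫⁻ x in ball (0 : En n) 5, (ENNReal.ofReal (m x)) ^ n ≤ ENNReal.ofReal S) :
    ∃ z : En n, ‖z‖ ≤ 1 / 2 ∧
      ∫⁻ x in ball z (1 / (5 * J)), (ENNReal.ofReal (m x)) ^ n ≤ ENNReal.ofReal ε := by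
  have hJr : (0:ℝ) < J := by exact_mod_cast hJ0
  let e : En n := EuclideanSpace.single ⟨0, hn⟩ 1
  have he : ‖e‖ = 1 := by simp [e]
  let z : ℕ → En n := fun j => ((j:ℝ) / (2 * J)) • e
  have hzn : ∀ j, ‖z j‖ = j / (2 * J) := by
    intro j
    simp only [z]
    rw [norm_smul, he, Real.norm_eq_abs, abs_of_nonneg (by positivity), mul_one]
  have hz : ∀ j < J, ‖z j‖ ≤ 1 / 2 := by
    intro j hj
    have : (j:ℝ) ≤ J := by exact_mod_cast hj.le
    rw [hzn, div_le_div_iff₀ (by positivity) (by norm_num)]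
    linarith
  by_contra hcon
  push Not at hcon
  have hdisj : ∀ i j, i < j → Disjoint (ball (z i) (1 / (5 * J))) (ball (z j) (1 / (5 * J))) := by
    intro i j hij
    apply ball_disjoint_ball
    have : dist (z i) (z j) = ((j:ℝ) - i) / (2 * J) := by
      have hij' : (i:ℝ) ≤ j := by exact_mod_cast hij.le
      rw [dist_comm, dist_eq_norm]
      simp only [z]
      rw [← sub_smul, norm_smul, he, mul_one, ← sub_div, Real.norm_eq_abs, abs_of_nonneg]
      exact div_nonneg (by linarith) (by positivity)
    rw [this]
    have hij' : (i:ℝ) + 1 ≤ j := by exact_mod_cast hij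
    calc (1:ℝ) / (5 * J) + 1 / (5 * J) = (4 / 5) / (2 * J) := by field_simp; norm_num
      _ ≤ _ := by gcongr; linarith
  have hsum : ∑ i ∈ Finset.range J, ∫⁻ x in ball (z i) (1 / (5 * J)), (ENNReal.ofReal (m x)) ^ n
      ≤ ENNReal.ofReal S := by
    rw [← lintegral_biUnion_finset]
    · refine le_trans (lintegral_mono_set ?_) hm
      refine iUnion₂_subset fun i hi => ball_subset_ball' ?_
      have h1 := hz i (Finset.mem_range.1 hi)
      have h2 : (1:ℝ) / (5 * J) ≤ 1 := by
        rw [div_le_one (by positivity)]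
        have : (1:ℝ) ≤ J := by exact_mod_cast hJ0
        linarith
      rw [dist_zero_right]; linarith
    · intro i hi j hj hij
      rcases lt_or_gt_of_ne hij with h | h
      · exact hdisj i j h
      · exact (hdisj j i h).symm
    · intro i _; exact measurableSet_ball
  have h2 : (J : ℝ≥0∞) * ENNReal.ofReal ε ≤ ENNReal.ofReal S := by
    refine le_trans ?_ hsum
    calc (J : ℝ≥0∞) * ENNReal.ofReal ε = ∑ i ∈ Finset.range J, ENNReal.ofReal ε := by simp
      _ ≤ _ := Finset.sum_le_sum fun i hi => (hcon _ (hz i (Finset.mem_range.1 hi))).le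
  rw [← ENNReal.ofReal_natCast, ← ENNReal.ofReal_mul (by positivity)] at h2
  have h3 : ENNReal.ofReal S < ENNReal.ofReal (J * ε) := by
    rw [ENNReal.ofReal_lt_ofReal_iff (by positivity)]
    exact hJ
  exact absurd h2 (not_le.2 h3)

theorem one_step_unit (n : ℕ) (hn : 0 < n) {ν : ℝ} (hν : 1 ≤ ν) (S : ℝ) :
    ∃ T : ℝ, 0 < T ∧ ∃ δ : ℝ, 0 < δ ∧ δ ≤ 1 / 2 ∧
    ∀ (v g H vt) (m : En n → ℝ), SS ν v g H vt m 0 5 0 T →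
      (∀ x : En n, ‖x‖ ≤ 1 → 1 ≤ v (x, 0)) →
      ∫⁻ x in ball (0 : En n) 5, (ENNReal.ofReal (m x)) ^ n ≤ ENNReal.ofReal S →
      (∀ x : En n, ‖x‖ ≤ 2 → δ ≤ v (x, T)) := by
  obtain ⟨ε, hε, δ, hδ0, hδ1, hsd⟩ := small_drift_iter n hν
  obtain ⟨J, hJ⟩ := exists_nat_gt (max 0 (S / ε))
  have hJr : (0:ℝ) < J := (le_max_left _ _).trans_lt hJ
  have hJ0 : 0 < J := by exact_mod_cast hJr
  have hJS : S < J * ε := by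
    have := (le_max_right _ _).trans_lt hJ
    rwa [div_lt_iff₀ hε] at this
  have hJ1 : (1:ℝ) ≤ J := by exact_mod_cast hJ0
  set d : ℝ := 1 / (5 * J) with hd
  have hd0 : 0 < d := by positivity
  have hd1 : d ≤ 1 / 5 := by
    rw [hd, div_le_div_iff₀ (by positivity) (by norm_num)]; linarith
  obtain ⟨T, hT0, η, hη0, hη1, hex⟩ := expand n hν (show 0 < d / 4 by positivity) S
  obtain ⟨k, hk⟩ := exists_nat_gt (T / d ^ 2)
  rw [div_lt_iff₀ (by positivity)] at hk
  have hδk : δ ^ k ≤ 1 := pow_le_one₀ hδ0.le (by linarith)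
  have hδk0 : 0 < δ ^ k := by positivity
  refine ⟨k * d ^ 2, by linarith, δ ^ k * η, by positivity, ?_, fun v g H vt m hS hv0 hm => ?_⟩
  · calc δ ^ k * η ≤ 1 * (1 / 2) := by gcongr
      _ = _ := by norm_num
  obtain ⟨z, hz, hzm⟩ := good_ball n hn m hε hJ0 hJS hm
  rw [← hd] at hzm
  -- small drift
  obtain ⟨g', H', vt', hS'⟩ := hS.scale (x₁ := z) (ρ := d) (R := 1) (t₁ := 0) (T := k)
      (A := 1) hd0 one_pos (by
        apply closedBall_subset_closedBall'
        rw [dist_zero_right]; linarith) le_rfl (by linarith)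
  have hIntr := (scale_lintegral m z hd0 1).trans (by simpa using hzm)
  have hr := hsd k _ _ _ _ _ hS' (by
    intro x hx
    simp only [inv_one, one_mul, mul_zero, add_zero]
    apply hv0
    refine (norm_add_le _ _).trans ?_
    rw [norm_smul, Real.norm_eq_abs, abs_of_pos hd0]
    nlinarith [norm_nonneg x]) hIntr
  have hcore : ∀ (x : En n) (t : ℝ), ‖x - z‖ ≤ d / 4 → t ∈ Icc (0:ℝ) (k * d ^ 2) →
      δ ^ k ≤ v (x, t) := by
    intro x t hx ht
    have := hr (d⁻¹ • (x - z)) (t / d ^ 2) (by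
      rw [norm_smul, Real.norm_eq_abs, abs_of_pos (by positivity), inv_mul_le_iff₀ hd0]
      linarith) ⟨div_nonneg ht.1 (by positivity), by rw [div_le_iff₀ (by positivity)]; exact ht.2⟩
    simp only [inv_one, one_mul, zero_add] at this
    rw [smul_inv_smul₀ hd0.ne', mul_div_cancel₀ _ (by positivity), add_sub_cancel] at this
    exact this
  -- expansion
  obtain ⟨g'', H'', vt'', hS''⟩ := hS.scale (x₁ := z) (ρ := 1) (R := 4) (t₁ := k * d ^ 2 - T) (T := T)
      (A := δ ^ k) one_pos hδk0 (by
        apply closedBall_subset_closedBall'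
        rw [dist_zero_right]; linarith) (by linarith) (by linarith)
  have hint2 := (scale_lintegral m z one_pos 4).trans (le_trans (lintegral_mono_set (by
        apply ball_subset_ball'
        rw [dist_zero_right]; linarith)) hm)
  have hr2 := hex _ _ _ _ _ hS'' (by
    intro x t hx ht
    simp only [one_smul, one_pow, one_mul]
    rw [inv_mul_eq_div, le_div_iff₀ (by positivity), one_mul]
    exact hcore _ _ (by simpa using hx) ⟨by linarith [ht.1], by linarith [ht.2]⟩) hint2
  intro x hx
  have := hr2 (x - z) ((norm_sub_le _ _).trans (by linarith))
  simp only [one_smul, one_pow, one_mul, add_sub_cancel, sub_add_cancel] at this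
  rw [inv_mul_eq_div, le_div_iff₀ (by positivity)] at this
  linarith

theorem one_step (n : ℕ) (hn : 0 < n) {ν : ℝ} (hν : 1 ≤ ν) (S : ℝ) :
    ∃ T : ℝ, 0 < T ∧ ∃ δ : ℝ, 0 < δ ∧ δ ≤ 1 / 2 ∧
    ∀ (v g H vt) (m : En n → ℝ) (x₀ : En n) (ρ t₀ A : ℝ), 0 < ρ → 0 ≤ A →
      SS ν v g H vt m x₀ (5 * ρ) t₀ (t₀ + ρ ^ 2 * T) →
      (∀ x : En n, ‖x - x₀‖ ≤ ρ → A ≤ v (x, t₀)) →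
      ∫⁻ x in ball x₀ (5 * ρ), (ENNReal.ofReal (m x)) ^ n ≤ ENNReal.ofReal S →
      (∀ x : En n, ‖x - x₀‖ ≤ 2 * ρ → δ * A ≤ v (x, t₀ + ρ ^ 2 * T)) := by
  obtain ⟨T, hT, δ, hδ0, hδ1, h⟩ := one_step_unit n hn hν S
  refine ⟨T, hT, δ, hδ0, hδ1, fun v g H vt m x₀ ρ t₀ A hρ hA hS hv hm x hx => ?_⟩
  rcases hA.eq_or_lt with rfl | hA
  · rw [mul_zero]
    refine hS.nonneg _ ⟨?_, ?_, le_rfl⟩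
    · rw [mem_closedBall, dist_eq_norm]; dsimp only; linarith
    · have : 0 ≤ ρ ^ 2 * T := by positivity
      dsimp only; linarith
  obtain ⟨g', H', vt', hS'⟩ := hS.scale (x₁ := x₀) (ρ := ρ) (R := 5) (t₁ := t₀) (T := T)
      (A := A) hρ hA (by rw [mul_comm]) le_rfl le_rfl
  have hr := h _ _ _ _ _ hS' (by
    intro x hx
    simp only [mul_zero, add_zero]
    rw [inv_mul_eq_div, le_div_iff₀ (by positivity), one_mul]
    apply hv
    rw [add_sub_cancel_left, norm_smul, Real.norm_eq_abs, abs_of_pos hρ]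
    nlinarith) ((scale_lintegral m x₀ hρ 5).trans (by rwa [mul_comm]))
    (ρ⁻¹ • (x - x₀)) (by
      rw [norm_smul, Real.norm_eq_abs, abs_of_pos (by positivity), inv_mul_le_iff₀ hρ]
      linarith)
  rw [smul_inv_smul₀ hρ.ne', add_sub_cancel] at hr
  rw [inv_mul_eq_div, le_div_iff₀ (by positivity)] at hr
  exact hr

/-- Spatial gradient as a linear functional. -/
def gu (u : En n × ℝ → ℝ) (X : En n × ℝ) : En n →L[ℝ] ℝ :=
  fderiv ℝ (fun x => u (x, X.2)) X.1

/-- Spatial Hessian as a bilinear form. -/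
def Hu (u : En n × ℝ → ℝ) (X : En n × ℝ) : En n →L[ℝ] En n →L[ℝ] ℝ :=
  ∑ j, (fderiv ℝ (fun x => Dx u j (x, X.2)) X.1).smulRight
    (EuclideanSpace.proj j : En n →L[ℝ] ℝ)

theorem lin_expand (L : En n →L[ℝ] ℝ) :
    L = ∑ j, L (EuclideanSpace.single j 1) • (EuclideanSpace.proj j : En n →L[ℝ] ℝ) := by
  ext ξ
  have h : ξ = ∑ i, ξ i • EuclideanSpace.single i (1 : ℝ) := by
    have := (EuclideanSpace.basisFun (Fin n) ℝ).sum_repr ξ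
    simpa using this.symm
  conv_lhs => rw [h]
  simp only [map_sum, map_smul, smul_eq_mul, sum_apply, smul_apply, PiLp.proj_apply]
  exact Finset.sum_congr rfl fun i _ => mul_comm _ _

theorem gu_eq (u : En n × ℝ → ℝ) (X : En n × ℝ) :
    gu u X = ∑ j, Dx u j X • (EuclideanSpace.proj j : En n →L[ℝ] ℝ) := lin_expand _

theorem Hu_eq (u : En n × ℝ → ℝ) (X : En n × ℝ) :
    Hu u X = ∑ j, ∑ i, Dxx u i j X • (EuclideanSpace.proj i : En n →L[ℝ] ℝ).smulRight
      (EuclideanSpace.proj j : En n →L[ℝ] ℝ) := by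
  unfold Hu
  refine Finset.sum_congr rfl fun j _ => ?_
  conv_lhs => rw [lin_expand (fderiv ℝ (fun x => Dx u j (x, X.2)) X.1)]
  ext ξ ζ
  simp [Dxx, Dx, Finset.sum_mul]
  refine Finset.sum_congr rfl fun i _ => by ring

theorem Hu_single (u : En n × ℝ → ℝ) (X : En n × ℝ) (i j : Fin n) :
    Hu u X (EuclideanSpace.single i 1) (EuclideanSpace.single j 1) = Dxx u i j X := by
  simp [Hu, Dxx, Dx, sum_apply, Pi.single_apply]

theorem gu_cont {u : En n × ℝ → ℝ} {V : Set (En n × ℝ)} (h : IsC21 u V) :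
    ContinuousOn (gu u) V := by
  rw [show gu u = fun X => ∑ j, Dx u j X • (EuclideanSpace.proj j : En n →L[ℝ] ℝ) from
    funext (gu_eq u)]
  exact continuousOn_finsetSum _ fun j _ => (h.cont_x j).smul continuousOn_const

theorem Hu_cont {u : En n × ℝ → ℝ} {V : Set (En n × ℝ)} (h : IsC21 u V) :
    ContinuousOn (Hu u) V := by
  rw [show Hu u = _ from funext (Hu_eq u)]
  exact continuousOn_finsetSum _ fun j _ => continuousOn_finsetSum _ fun i _ =>
    (h.cont_xx i j).smul continuousOn_const

theorem IsC21.c2d {u : En n × ℝ → ℝ} {V : Set (En n × ℝ)} (hV : IsOpen V) (h : IsC21 u V) :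
    C2D u (gu u) (Hu u) (Dt u) V where
  cont := h.cont
  hg X hX := (h.diff_x X hX).hasFDerivAt
  hH X hX := by
    have : (fun x => gu u (x, X.2)) =
        fun x => ∑ j, Dx u j (x, X.2) • (EuclideanSpace.proj j : En n →L[ℝ] ℝ) :=
      funext fun x => gu_eq u _
    rw [this]
    unfold Hu
    refine HasFDerivAt.fun_sum fun j _ => ?_
    exact ((h.diff_xx j X hX).hasFDerivAt).smul_const _
  Hcont := Hu_cont h
  Hsymm X hX ξ ζ := by
    have hev : ∀ᶠ x in 𝓝 X.1, (x, X.2) ∈ V := by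
      have hc : ContinuousAt (fun x : En n => ((x, X.2) : En n × ℝ)) X.1 := by fun_prop
      exact hc.preimage_mem_nhds (hV.mem_nhds hX)
    refine second_derivative_symmetric_of_eventually (f := fun x => u (x, X.2))
      (f' := fun x => gu u (x, X.2)) (f'' := Hu u X) (x := X.1) ?_ ?_ ξ ζ
    · filter_upwards [hev] with x hx
      exact (h.diff_x _ hx).hasFDerivAt
    · have : (fun x => gu u (x, X.2)) =
        fun x => ∑ j, Dx u j (x, X.2) • (EuclideanSpace.proj j : En n →L[ℝ] ℝ) :=
        funext fun x => gu_eq u _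
      rw [this]
      unfold Hu
      refine HasFDerivAt.fun_sum fun j _ => ?_
      exact ((h.diff_xx j X hX).hasFDerivAt).smul_const _
  ht X hX := (h.diff_t X hX).hasDerivAt

theorem C2D.mono {w g H wt} {Q Q' : Set (En n × ℝ)} (h : C2D w g H wt Q) (hQ : Q' ⊆ Q) :
    C2D w g H wt Q' where
  cont := h.cont.mono hQ
  hg X hX := h.hg X (hQ hX)
  hH X hX := h.hH X (hQ hX)
  Hcont := h.Hcont.mono hQ
  Hsymm X hX := h.Hsymm X (hQ hX)
  ht X hX := h.ht X (hQ hX)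

theorem time_C2D (M κ t₀ : ℝ) (Q : Set (En n × ℝ)) :
    C2D (fun X : En n × ℝ => M + κ * (X.2 - t₀)) (fun _ => 0) (fun _ => 0) (fun _ => κ) Q where
  cont := by fun_prop
  hg X hX := hasFDerivAt_const (M + κ * (X.2 - t₀)) X.1
  hH X hX := hasFDerivAt_const (0 : En n →L[ℝ] ℝ) X.1
  Hcont := continuousOn_const
  Hsymm X hX ξ ζ := rfl
  ht X hX := by
    simpa using (((hasDerivAt_id X.2).sub_const t₀).const_mul κ).const_add M

/-- The set of admissible matrices, as functions. -/
def AdmSet (n : ℕ) (ν : ℝ) : Set (Fin n → Fin n → ℝ) := {a | Adm ν a}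

theorem AdmSet_compact (n : ℕ) {ν : ℝ} (hν : 0 < ν) : IsCompact (AdmSet n ν) := by
  have hK : IsCompact (Set.pi univ fun _ : Fin n => Set.pi univ fun _ : Fin n => Icc (-ν) ν) :=
    isCompact_univ_pi fun _ => isCompact_univ_pi fun _ => isCompact_Icc
  refine hK.of_isClosed_subset ?_ ?_
  · have : AdmSet n ν = (⋂ ξ : Fin n → ℝ, {a : Fin n → Fin n → ℝ |
        ν⁻¹ * (∑ i, ξ i ^ 2) ≤ ∑ i, ∑ j, a i j * ξ i * ξ j}) ∩ {a | (∑ i, ∑ j, (a i j) ^ 2) ≤ ν ^ 2} := by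
      ext a; simp [AdmSet, Adm]
    rw [this]
    refine IsClosed.inter (isClosed_iInter fun ξ => isClosed_le (by fun_prop) (by fun_prop))
      (isClosed_le (by fun_prop) (by fun_prop))
  · intro a ha i _ j _
    refine abs_le.1 (abs_le_of_sq_le_sq ?_ hν.le)
    refine le_trans ?_ ha.2
    refine le_trans ?_ (Finset.single_le_sum (f := fun i => ∑ j, a i j ^ 2)
      (fun i _ => Finset.sum_nonneg fun j _ => sq_nonneg _) (Finset.mem_univ i))
    exact Finset.single_le_sum (f := fun j => a i j ^ 2) (fun j _ => sq_nonneg _) (Finset.mem_univ j)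

/-- The maximal operator. -/
def pucci (ν : ℝ) (H : En n →L[ℝ] En n →L[ℝ] ℝ) : ℝ :=
  sSup ((fun a : Fin n → Fin n → ℝ => trA a H) '' AdmSet n ν)

theorem trA_cont : Continuous fun q : (En n →L[ℝ] En n →L[ℝ] ℝ) × (Fin n → Fin n → ℝ) =>
    trA q.2 q.1 := by
  unfold trA
  fun_prop

theorem pucci_cont {ν : ℝ} (hν : 0 < ν) : Continuous (pucci (n := n) ν) :=
  (AdmSet_compact n hν).continuous_sSup trA_cont

theorem trA_cont' (H : En n →L[ℝ] En n →L[ℝ] ℝ) :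
    Continuous fun a : Fin n → Fin n → ℝ => trA a H := by
  unfold trA
  fun_prop

theorem le_pucci {ν : ℝ} (hν : 0 < ν) {a : Matrix (Fin n) (Fin n) ℝ} (ha : Adm ν a)
    (H : En n →L[ℝ] En n →L[ℝ] ℝ) : trA a H ≤ pucci ν H :=
  le_csSup ((AdmSet_compact n hν).image (trA_cont' H)).bddAbove ⟨a, ha, rfl⟩

theorem pucci_attained {ν : ℝ} (hν : 0 < ν) {a : Matrix (Fin n) (Fin n) ℝ} (ha : Adm ν a)
    (H : En n →L[ℝ] En n →L[ℝ] ℝ) : ∃ a' : Matrix (Fin n) (Fin n) ℝ, Adm ν a' ∧ pucci ν H = trA a' H := by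
  obtain ⟨a', h1, h2⟩ := (AdmSet_compact n hν).exists_sSup_image_eq ⟨a, ha⟩ (trA_cont' H).continuousOn
  exact ⟨a', h1, h2⟩

theorem sSup_continuousOn {G : En n × ℝ → ℝ} {B : Set (En n)} {t₀ t₁ : ℝ}
    (hG : ContinuousOn G (B ×ˢ Icc t₀ t₁)) :
    ContinuousOn (fun x => sSup ((fun t => G (x, t)) '' Icc t₀ t₁)) B := by
  rw [continuousOn_iff_continuous_domRestrict]
  have h : Continuous fun x : B => sSup ((fun t : Icc t₀ t₁ => G ((x : En n), (t : ℝ))) '' univ) := by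
    refine (isCompact_univ).continuous_sSup (f := fun (x : B) (t : Icc t₀ t₁) => G ((x : En n), (t : ℝ))) ?_
    exact hG.comp_continuous (f := fun q : B × Icc t₀ t₁ => ((q.1 : En n), (q.2 : ℝ))) (by fun_prop)
      fun q => ⟨q.1.2, q.2.2⟩
  refine h.congr fun x => ?_
  congr 1
  ext r
  simp

theorem eta_choice {f p : En n × ℝ → ℝ} {Q : Set (En n × ℝ)} (hQ : IsCompact Q)
    (hf : ContinuousOn f Q) (hp : ContinuousOn p Q) (hf0 : ∀ X ∈ Q, 0 ≤ f X)
    (hp0 : ∀ X ∈ Q, 0 ≤ p X) (h0 : ∀ X ∈ Q, p X = 0 → f X = 0) {κ : ℝ} (hκ : 0 < κ) :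
    ∃ η : ℝ, 0 < η ∧ ∀ X ∈ Q, η * f X ≤ κ * (p X + η) := by
  have hcl : IsCompact (Q ∩ f ⁻¹' Ici κ) :=
    (hf.preimage_isClosed_of_isClosed hQ.isClosed isClosed_Ici) |> hQ.of_isClosed_subset <|
      inter_subset_left
  obtain ⟨C, hC⟩ := hQ.bddAbove_image hf
  have hC' : ∀ X ∈ Q, f X ≤ max C 1 := fun X hX => (hC ⟨X, hX, rfl⟩).trans (le_max_left _ _)
  have hC1 : 0 < max C 1 := lt_of_lt_of_le one_pos (le_max_right _ _)
  rcases (Q ∩ f ⁻¹' Ici κ).eq_empty_or_nonempty with he | hne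
  · refine ⟨1, one_pos, fun X hX => ?_⟩
    have : f X < κ := by
      by_contra hc
      have : X ∈ Q ∩ f ⁻¹' Ici κ := ⟨hX, not_lt.1 hc⟩
      rw [he] at this
      exact this
    nlinarith [hp0 X hX]
  · obtain ⟨X₀, hX₀, hmin⟩ := hcl.exists_isMinOn hne (hp.mono inter_subset_left)
    have hc : 0 < p X₀ := by
      refine lt_of_le_of_ne (hp0 _ hX₀.1) fun h => ?_
      have h1 := h0 _ hX₀.1 h.symm
      have h2 : κ ≤ f X₀ := hX₀.2
      linarith
    refine ⟨κ * p X₀ / max C 1, by positivity, fun X hX => ?_⟩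
    set η := κ * p X₀ / max C 1 with hη
    have hηpos : 0 < η := by positivity
    rcases lt_or_ge (f X) κ with h | h
    · have := hp0 X hX
      nlinarith [mul_nonneg hκ.le this]
    · have h1 : p X₀ ≤ p X := hmin (show X ∈ Q ∩ f ⁻¹' Ici κ from ⟨hX, h⟩)
      have h2 : η * f X ≤ η * max C 1 := mul_le_mul_of_nonneg_left (hC' X hX) hηpos.le
      have h3 : η * max C 1 = κ * p X₀ := by rw [hη]; field_simp
      nlinarith

theorem ofReal_le_essSup {G : En n × ℝ → ℝ} {b : En n × ℝ → En n} {V : Set (En n × ℝ)}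
    (hV : IsOpen V) (hG : ContinuousOn G V) (hb : ∀ X ∈ V, G X ≤ ‖b X‖) {x : En n} {t₁ : ℝ}
    (hx : (x, t₁) ∈ V) :
    ENNReal.ofReal (G (x, t₁)) ≤
      essSup (fun t => (‖b (x, t)‖₊ : ℝ≥0∞)) (volume.restrict {t | (x, t) ∈ V}) := by
  by_contra hlt
  rw [not_le] at hlt
  set e := essSup (fun t => (‖b (x, t)‖₊ : ℝ≥0∞)) (volume.restrict {t | (x, t) ∈ V}) with he
  have hW : IsOpen {t : ℝ | (x, t) ∈ V} := hV.preimage (by fun_prop : Continuous fun t : ℝ => (x, t))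
  have hc : ContinuousOn (fun t : ℝ => ENNReal.ofReal (G (x, t))) {t : ℝ | (x, t) ∈ V} :=
    ENNReal.continuous_ofReal.comp_continuousOn
      (hG.comp (by fun_prop : Continuous fun t : ℝ => (x, t)).continuousOn fun t ht => ht)
  have hU := hc.isOpen_inter_preimage hW (isOpen_Ioi (a := e))
  have hpos := hU.measure_pos volume ⟨t₁, hx, hlt⟩
  have hae : ∀ᵐ t ∂(volume.restrict {t : ℝ | (x, t) ∈ V}), (‖b (x, t)‖₊ : ℝ≥0∞) ≤ e :=
    ENNReal.ae_le_essSup _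
  rw [ae_restrict_iff' hW.measurableSet] at hae
  have hnull : volume ({t : ℝ | (x, t) ∈ V} ∩ (fun t : ℝ => ENNReal.ofReal (G (x, t))) ⁻¹' Ioi e) = 0 := by
    refine measure_mono_null (fun t ht => ?_) (ae_iff.1 hae)
    intro hh
    have h1 := hh ht.1
    have h2 : e < ENNReal.ofReal (G (x, t)) := ht.2
    have h3 : ENNReal.ofReal (G (x, t)) ≤ (‖b (x, t)‖₊ : ℝ≥0∞) := by
      rw [← enorm_eq_nnnorm, ← ofReal_norm_eq_enorm]
      exact ENNReal.ofReal_le_ofReal (hb _ ht.1)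
    exact absurd (h3.trans h1) (not_le.2 h2)
  exact hpos.ne' hnull

theorem gu_apply (u : En n × ℝ → ℝ) (X : En n × ℝ) (ξ : En n) :
    gu u X ξ = ∑ i, ξ i * Dx u i X := by
  rw [gu_eq]
  simp only [sum_apply, smul_apply, PiLp.proj_apply, smul_eq_mul]
  exact Finset.sum_congr rfl fun i _ => mul_comm _ _

theorem trA_Hu (a : Matrix (Fin n) (Fin n) ℝ) (u : En n × ℝ → ℝ) (X : En n × ℝ) :
    trA a (Hu u X) = ∑ i, ∑ j, a i j * Dxx u i j X := by
  simp only [trA, Hu_single]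

theorem reduction {ν : ℝ} (hν : 1 ≤ ν) {S : ℝ} {V : Set (En n × ℝ)} (hV : IsOpen V)
    {u : En n × ℝ → ℝ} (hu : IsC21 u V) {a : En n × ℝ → Matrix (Fin n) (Fin n) ℝ}
    {b : En n × ℝ → En n} (ha : UnifParabolic ν a V)
    (hb : LxnLtinfPow b V ≤ ENNReal.ofReal S) (hpde : ∀ X ∈ V, 0 ≤ -Dt u X + Lop a b u X)
    {M : ℝ} (hM : ∀ X ∈ V, u X ≤ M) {x₀ : En n} {R t₀ t₁ : ℝ} (ht : t₀ ≤ t₁)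
    (hQV : ccyl x₀ R t₀ t₁ ⊆ V) {κ : ℝ} (hκ : 0 < κ) :
    ∃ g H vt m, SS ν ((fun X : En n × ℝ => M + κ * (X.2 - t₀)) - u) g H vt m x₀ R t₀ t₁ ∧
      ∫⁻ x in ball x₀ R, (ENNReal.ofReal (m x))^n ≤ ENNReal.ofReal S := by
  have hν0 : 0 < ν := by linarith
  set Q := ccyl x₀ R t₀ t₁ with hQ
  set F : En n × ℝ → ℝ := fun X => -Dt u X + pucci ν (Hu u X) with hF
  set f : En n × ℝ → ℝ := fun X => max (-F X) 0 with hf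
  have hFc : ContinuousOn F V :=
    hu.cont_t.neg.add ((pucci_cont hν0).comp_continuousOn (Hu_cont hu))
  have hfc : ContinuousOn f V := hFc.neg.sup continuousOn_const
  have hpc : ContinuousOn (fun X => ‖gu u X‖) V := (gu_cont hu).norm
  have hf0 : ∀ X, 0 ≤ f X := fun X => le_max_right _ _
  have hfb : ∀ X ∈ V, f X ≤ ‖b X‖ * ‖gu u X‖ := by
    intro X hX
    refine max_le ?_ (by positivity)
    have h1 := hpde X hX
    have h2 : Lop a b u X = trA (a X) (Hu u X) + gu u X (b X) := by
      rw [trA_Hu, gu_apply]; rfl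
    have h3 : trA (a X) (Hu u X) ≤ pucci ν (Hu u X) := le_pucci hν0 (ha X hX) _
    have h4 : gu u X (b X) ≤ ‖gu u X‖ * ‖b X‖ :=
      (le_abs_self _).trans ((gu u X).le_opNorm (b X))
    simp only [hF]
    linarith [mul_comm ‖gu u X‖ ‖b X‖]
  obtain ⟨η, hη, hηQ⟩ := eta_choice (isCompact_ccyl x₀ R t₀ t₁) (hfc.mono hQV) (hpc.mono hQV)
    (fun X _ => hf0 X) (fun X _ => norm_nonneg _) (fun X hX h => by
      have := hfb X (hQV hX)
      rw [h, mul_zero] at this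
      exact le_antisymm this (hf0 X)) hκ
  set G : En n × ℝ → ℝ := fun X => f X / (‖gu u X‖ + η) with hGdef
  have hden : ∀ X, 0 < ‖gu u X‖ + η := fun X => by positivity
  have hGc : ContinuousOn G V := hfc.div (hpc.add continuousOn_const) fun X _ => (hden X).ne'
  have hG0 : ∀ X, 0 ≤ G X := fun X => div_nonneg (hf0 X) (hden X).le
  have hGb : ∀ X ∈ V, G X ≤ ‖b X‖ := by
    intro X hX
    rw [div_le_iff₀ (hden X)]
    have := hfb X hX
    nlinarith [norm_nonneg (b X)]
  set m : En n → ℝ := fun x => sSup ((fun t => G (x, t)) '' Icc t₀ t₁) with hm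
  have hsec : ∀ x ∈ closedBall x₀ R, ContinuousOn (fun t => G (x, t)) (Icc t₀ t₁) := by
    intro x hx
    exact hGc.comp (by fun_prop : Continuous fun t : ℝ => (x, t)).continuousOn
      fun t ht => hQV ⟨hx, ht⟩
  have hmG : ∀ X ∈ Q, G X ≤ m X.1 := fun X hX =>
    le_csSup (isCompact_Icc.bddAbove_image (hsec X.1 hX.1)) ⟨X.2, hX.2, rfl⟩
  have hm0 : ∀ x ∈ closedBall x₀ R, 0 ≤ m x := fun x hx =>
    (hG0 (x, t₀)).trans (hmG (x, t₀) ⟨hx, left_mem_Icc.2 ht⟩)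
  refine ⟨_, _, _, m, ⟨(time_C2D M κ t₀ Q).sub ((hu.c2d hV).mono hQV), ?_, ?_, hm0, ?_⟩, ?_⟩
  · intro X hX
    have h1 := hM X (hQV hX)
    have h2 : 0 ≤ κ * (X.2 - t₀) := mul_nonneg hκ.le (sub_nonneg.2 hX.2.1)
    simp only [Pi.sub_apply]
    linarith
  · exact sSup_continuousOn (hGc.mono hQV)
  · intro X hX
    obtain ⟨a', ha', hpa⟩ := pucci_attained hν0 (ha X (hQV hX)) (Hu u X)
    refine ⟨a', ha', ?_⟩
    have h1 : trA a' (((fun _ : En n × ℝ => (0 : En n →L[ℝ] En n →L[ℝ] ℝ)) - Hu u) X) =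
        - pucci ν (Hu u X) := by
      rw [Pi.sub_apply, trA_sub, hpa]
      simp [trA]
    have h2 : ‖((fun _ : En n × ℝ => (0 : En n →L[ℝ] ℝ)) - gu u) X‖ = ‖gu u X‖ := by
      simp
    rw [h1, h2, Pi.sub_apply]
    have h3 : -F X ≤ f X := le_max_left _ _
    have h4 : f X = G X * (‖gu u X‖ + η) := by
      simp only [hGdef]; field_simp [(hden X).ne']
    have h5 := hηQ X hX
    have h6 : η * G X ≤ κ := by
      rw [h4] at h5
      have := hden X
      by_contra hc
      push Not at hc
      nlinarith
    have h7 := mul_le_mul_of_nonneg_right (hmG X hX) (norm_nonneg (gu u X))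
    simp only [hF] at h3
    nlinarith
  · refine le_trans ?_ hb
    refine le_trans ?_ (setLIntegral_le_lintegral (ball x₀ R) _)
    refine setLIntegral_mono' measurableSet_ball fun x hx => ?_
    have hx' := ball_subset_closedBall hx
    obtain ⟨t', ht', hE⟩ := isCompact_Icc.exists_sSup_image_eq (nonempty_Icc.2 ht) (hsec x hx')
    gcongr
    simp only [hm]
    rw [hE]
    exact ofReal_le_essSup hV hGc hGb (hQV ⟨hx', ht'⟩)

theorem one_step_u (n : ℕ) (hn : 0 < n) {ν : ℝ} (hν : 1 ≤ ν) (S : ℝ) :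
    ∃ T : ℝ, 0 < T ∧ ∃ δ : ℝ, 0 < δ ∧ δ ≤ 1/2 ∧
    ∀ (V : Set (En n × ℝ)) (u : En n × ℝ → ℝ) (a : En n × ℝ → Matrix (Fin n) (Fin n) ℝ)
      (b : En n × ℝ → En n), IsOpen V → IsC21 u V → UnifParabolic ν a V →
      LxnLtinfPow b V ≤ ENNReal.ofReal S → (∀ X ∈ V, 0 ≤ -Dt u X + Lop a b u X) →
    ∀ (M : ℝ), (∀ X ∈ V, u X ≤ M) → ∀ (x₀ : En n) (ρ t₀ A : ℝ), 0 < ρ → 0 ≤ A →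
      ccyl x₀ (5*ρ) t₀ (t₀ + ρ^2*T) ⊆ V → (∀ x, ‖x - x₀‖ ≤ ρ → A ≤ M - u (x, t₀)) →
      ∀ x, ‖x - x₀‖ ≤ 2*ρ → δ*A ≤ M - u (x, t₀ + ρ^2*T) := by
  obtain ⟨T, hT, δ, hδ, hδ2, h⟩ := one_step n hn hν S
  refine ⟨T, hT, δ, hδ, hδ2, ?_⟩
  intro V u a b hV hu ha hb hpde M hM x₀ ρ t₀ A hρ hA hQV hIni x hx
  have key : ∀ κ : ℝ, 0 < κ → δ * A ≤ M - u (x, t₀ + ρ^2*T) + κ * (ρ^2*T) := by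
    intro κ hκ
    have hle : t₀ ≤ t₀ + ρ^2*T := by have : 0 < ρ^2*T := by positivity
                                     linarith
    obtain ⟨g, H, vt, m, hss, hm⟩ := reduction hν hV hu ha hb hpde hM hle hQV hκ
    have := h _ g H vt m x₀ ρ t₀ A hρ hA hss (fun z hz => by
      have := hIni z hz
      simp only [Pi.sub_apply]
      linarith) hm x hx
    simp only [Pi.sub_apply] at this
    linarith
  have hpos : 0 < ρ^2*T := by positivity
  refine le_of_forall_pos_le_add fun ε hε => ?_
  have := key (ε / (ρ^2*T)) (by positivity)
  rwa [div_mul_cancel₀ _ hpos.ne'] at this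

theorem slantCyl_open (y : En n) {s : ℝ} (r : ℝ) : IsOpen (slantCyl (y, s) r) := by
  have : slantCyl (y, s) r = {X : En n × ℝ | ‖X.1 - (X.2 / s) • y‖ < r} ∩
      ({X | 0 < X.2} ∩ {X | X.2 < s}) := rfl
  rw [this]
  refine (isOpen_lt (by fun_prop) (by fun_prop)).inter
    ((isOpen_lt (by fun_prop) (by fun_prop)).inter (isOpen_lt (by fun_prop) (by fun_prop)))

theorem slantCyl_compact (y : En n) {s : ℝ} (hs : 0 < s) (r : ℝ) :
    IsCompact (closure (slantCyl (y, s) r)) := by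
  have hK : IsCompact (closedBall (0 : En n) (r + ‖y‖) ×ˢ Icc 0 s) :=
    (isCompact_closedBall _ _).prod isCompact_Icc
  refine hK.closure_of_subset ?_
  rintro ⟨x, t⟩ ⟨h1, h2, h3⟩
  simp only at h1 h2 h3
  refine ⟨?_, h2.le, h3.le⟩
  rw [mem_closedBall_zero_iff]
  have h4 : ‖(t / s) • y‖ ≤ ‖y‖ := by
    rw [norm_smul, Real.norm_of_nonneg (by positivity)]
    exact mul_le_of_le_one_left (norm_nonneg _) ((div_le_one hs).2 h3.le)
  have h5 : ‖x‖ ≤ ‖x - (t / s) • y‖ + ‖(t / s) • y‖ := by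
    simpa using norm_add_le (x - (t / s) • y) ((t / s) • y)
  simp only
  linarith

theorem mem_closure_slantCyl (y : En n) {s : ℝ} (hs : 0 < s) {r : ℝ} {x : En n} {t : ℝ}
    (hx : ‖x - (t / s) • y‖ < r) (h0 : 0 ≤ t) (h1 : t ≤ s) :
    (x, t) ∈ closure (slantCyl (y, s) r) := by
  have hc : Continuous fun l : ℝ =>
      ((x + (l * (s/2 - t) / s) • y, t + l * (s/2 - t)) : En n × ℝ) := by fun_prop
  have ht : Tendsto (fun l : ℝ => ((x + (l * (s/2 - t) / s) • y, t + l * (s/2 - t)) : En n × ℝ))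
      (𝓝[>] 0) (𝓝 (x, t)) := by
    have := hc.tendsto 0
    simp only [zero_mul, zero_div, zero_smul, add_zero] at this
    exact this.mono_left nhdsWithin_le_nhds
  refine mem_closure_of_tendsto ht ?_
  filter_upwards [Ioo_mem_nhdsGT (show (0:ℝ) < 1 by norm_num)] with l hl
  refine ⟨?_, ?_, ?_⟩
  · have : x + (l * (s/2 - t) / s) • y - ((t + l * (s/2 - t)) / s) • y = x - (t / s) • y := by
      rw [add_div, add_smul]; abel
    simpa only [this] using hx
  · simp only
    nlinarith [hl.1, hl.2]
  · simp only
    nlinarith [hl.1, hl.2]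

/-- Iteration of the one step estimate along the axis. -/
theorem iterate_step {V : Set (En n × ℝ)} {u : En n × ℝ → ℝ} {T δ M s r ρ τ A : ℝ} {y : En n}
    (hδ : 0 < δ) (hs : 0 < s) (hρ : 0 < ρ) (hT : 0 < T) (hA : 0 ≤ A)
    (hVdef : V = slantCyl (y, s) r)
    (step : ∀ (x₀ : En n) (t₀ A : ℝ), 0 ≤ A →
      ccyl x₀ (5*ρ) t₀ (t₀ + ρ^2*T) ⊆ V → (∀ x, ‖x - x₀‖ ≤ ρ → A ≤ M - u (x, t₀)) →
      ∀ x, ‖x - x₀‖ ≤ 2*ρ → δ*A ≤ M - u (x, t₀ + ρ^2*T))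
    (hy : ‖y‖ * (ρ^2*T) ≤ s * ρ) (hr : 6 * ρ < r) (hτ : 0 < τ) (P : ℕ)
    (hP : τ + P * (ρ^2*T) < s)
    (hIni : ∀ x, ‖x - (τ / s) • y‖ ≤ ρ → A ≤ M - u (x, τ)) :
    ∀ k : ℕ, k ≤ P → ∀ x, ‖x - ((τ + k * (ρ^2*T)) / s) • y‖ ≤ ρ →
      δ^k * A ≤ M - u (x, τ + k * (ρ^2*T)) := by
  have hΔ : 0 < ρ^2*T := by positivity
  have hshift : ∀ d : ℝ, 0 ≤ d → d ≤ ρ^2*T → ‖(d / s) • y‖ ≤ ρ := by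
    intro d hd hd'
    rw [norm_smul, Real.norm_of_nonneg (by positivity), div_mul_eq_mul_div, div_le_iff₀ hs]
    nlinarith [norm_nonneg y]
  intro k
  induction k with
  | zero => intro _ x hx; simpa using hIni x (by simpa using hx)
  | succ k ih =>
    intro hk x hx
    have hkP : (k : ℝ) + 1 ≤ P := by exact_mod_cast hk
    have e : τ + ((k + 1 : ℕ) : ℝ) * (ρ^2*T) = (τ + k * (ρ^2*T)) + ρ^2*T := by push_cast; ring
    rw [e] at hx ⊢
    set t := τ + k * (ρ^2*T) with htdef
    have ht0 : 0 < t := by positivity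
    have ht1 : t + ρ^2*T < s := by
      have : ((k : ℝ) + 1) * (ρ^2*T) ≤ P * (ρ^2*T) := mul_le_mul_of_nonneg_right hkP hΔ.le
      rw [htdef]; linarith
    have hsub : ccyl ((t / s) • y) (5*ρ) t (t + ρ^2*T) ⊆ V := by
      rw [hVdef]
      rintro ⟨z, t'⟩ ⟨hz, ht'⟩
      simp only [mem_closedBall, dist_eq_norm] at hz
      have hta : t ≤ t' := ht'.1
      have htb : t' ≤ t + ρ^2*T := ht'.2
      refine ⟨?_, by simp only; linarith, by simp only; linarith⟩
      simp only
      have e2 : z - (t' / s) • y = (z - (t / s) • y) - ((t' - t) / s) • y := by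
        rw [sub_div, sub_smul]; abel
      rw [e2]
      have := norm_sub_le (z - (t / s) • y) (((t' - t) / s) • y)
      have := hshift (t' - t) (by linarith) (by linarith)
      linarith
    have := step ((t / s) • y) t (δ^k * A) (by positivity) hsub (ih (by omega)) x (by
      have e2 : x - (t / s) • y = (x - ((t + ρ^2*T) / s) • y) + ((ρ^2*T) / s) • y := by
        rw [add_div t (ρ^2*T) s]; module
      rw [e2]
      have h1 := norm_add_le (x - ((t + ρ^2*T) / s) • y) (((ρ^2*T) / s) • y)
      have h2 := hshift (ρ^2*T) hΔ.le le_rfl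
      linarith)
    rw [pow_succ]
    linarith

theorem slanted_cylinder_aux
    (n : ℕ) (hn : 0 < n) (ν K S : ℝ) (hν : 1 ≤ ν) (hK : 1 < K) :
    ∃ β₂ : ℝ, 0 < β₂ ∧ β₂ < 1 ∧
      ∀ (y : En n) (s r : ℝ) (u : En n × ℝ → ℝ)
        (a : En n × ℝ → Matrix (Fin n) (Fin n) ℝ) (b : En n × ℝ → En n),
        0 < s → 0 < r →
        K⁻¹ * r * ‖y‖ ≤ s → s ≤ K * r ^ 2 →
        IsC21 u (closure (slantCyl (y, s) r)) →
        UnifParabolic ν a (slantCyl (y, s) r) →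
        LxnLtinfPow b (slantCyl (y, s) r) ≤ ENNReal.ofReal S →
        (∀ X ∈ slantCyl (y, s) r, 0 ≤ -Dt u X + Lop a b u X) →
        (∀ x ∈ ball (0 : En n) r, u (x, 0) ≤ 0) →
        u (y, s) ≤ β₂ * supPos u (slantCyl (y, s) r) := by
  obtain ⟨T, hT, δ, hδ, hδ2, hstep⟩ := one_step_u n hn hν S
  set c : ℝ := max (K * T) 7 with hc
  have hc7 : 7 ≤ c := le_max_right _ _
  have hcK : K * T ≤ c := le_max_left _ _
  obtain ⟨P, hP⟩ := exists_nat_ge (max (K * c^2 / T) 1)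
  have hP1 : (1:ℝ) ≤ P := (le_max_right _ _).trans hP
  have hPc : K * c^2 ≤ P * T := (div_le_iff₀ hT).1 ((le_max_left _ _).trans hP)
  have hPn : P ≠ 0 := by rintro rfl; norm_num at hP1
  have hδP : 0 < δ^P := by positivity
  have hδP1 : δ^P < 1 := pow_lt_one₀ hδ.le (by linarith) hPn
  refine ⟨1 - δ^P, by linarith, by linarith, ?_⟩
  intro y s r u a b hs hr hy hsr hu ha hb hpde hbase
  have hy' : r * ‖y‖ ≤ K * s := by
    have h1 : K * (K⁻¹ * r * ‖y‖) ≤ K * s := mul_le_mul_of_nonneg_left hy (by linarith)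
    have h2 : K * (K⁻¹ * r * ‖y‖) = r * ‖y‖ := by field_simp
    linarith
  obtain ⟨V, hV⟩ : ∃ V, V = slantCyl (y, s) r := ⟨_, rfl⟩
  rw [← hV] at hu ha hb hpde ⊢
  have hVo : IsOpen V := hV ▸ slantCyl_open y r
  have hVc : IsCompact (closure V) := hV ▸ slantCyl_compact y hs r
  have hcl : ∀ {x : En n} {t : ℝ}, ‖x - (t / s) • y‖ < r → 0 ≤ t → t ≤ s →
      (x, t) ∈ closure V := fun h1 h2 h3 => hV ▸ mem_closure_slantCyl y hs h1 h2 h3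
  have huV : IsC21 u V :=
    { cont := hu.cont.mono subset_closure
      diff_t := fun X hX => hu.diff_t X (subset_closure hX)
      diff_x := fun X hX => hu.diff_x X (subset_closure hX)
      diff_xx := fun j X hX => hu.diff_xx j X (subset_closure hX)
      cont_t := hu.cont_t.mono subset_closure
      cont_x := fun i => (hu.cont_x i).mono subset_closure
      cont_xx := fun i j => (hu.cont_xx i j).mono subset_closure }
  set M := supPos u V with hMdef
  have hbdd : BddAbove ((fun X => max (u X) 0) '' V) :=
    (hVc.bddAbove_image (hu.cont.sup continuousOn_const)).mono (image_mono subset_closure)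
  have hM : ∀ X ∈ V, u X ≤ M := fun X hX =>
    (le_max_left _ _).trans (le_csSup hbdd ⟨X, hX, rfl⟩)
  have hM0 : 0 ≤ M := Real.sSup_nonneg (by rintro _ ⟨X, _, rfl⟩; exact le_max_right _ _)
  -- end point
  have hYcl : (y, s) ∈ closure V := hcl (by rw [div_self hs.ne']; simpa using hr) hs.le le_rfl
  have hend : ∀ γ : ℝ, 0 < γ → ∀ᶠ τ in 𝓝[>] (0:ℝ), u (y, s) ≤ u (((s - τ) / s) • y, s - τ) + γ := by
    intro γ hγ
    have hcw : ContinuousWithinAt u (closure V) (y, s) := hu.cont _ hYcl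
    have htd : Tendsto (fun τ : ℝ => ((((s - τ) / s) • y, s - τ) : En n × ℝ)) (𝓝[>] 0)
        (𝓝[closure V] (y, s)) := by
      refine tendsto_nhdsWithin_iff.2 ⟨?_, ?_⟩
      · have hcont : Continuous (fun τ : ℝ => ((((s - τ) / s) • y, s - τ) : En n × ℝ)) := by fun_prop
        have := hcont.tendsto 0
        simp only [sub_zero, div_self hs.ne', one_smul] at this
        exact this.mono_left nhdsWithin_le_nhds
      · filter_upwards [Ioo_mem_nhdsGT hs] with τ hτ
        exact hcl (by simpa using hr) (by linarith [hτ.2]) (by linarith [hτ.1])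
    have := (hcw.tendsto.comp htd).eventually (lt_mem_nhds (show u (y, s) - γ < u (y, s) by linarith))
    filter_upwards [this] with τ hτ
    simp only [Function.comp_apply] at hτ
    linarith
  -- initial layer
  have hstart : ∀ γ : ℝ, 0 < γ → ∀ᶠ τ in 𝓝[>] (0:ℝ), ∀ x : En n, ‖x‖ ≤ r/2 → u (x, τ) ≤ γ := by
    intro γ hγ
    obtain ⟨τ₀, hτ₀, hτ₀s, hτ₀y⟩ : ∃ τ₀ : ℝ, 0 < τ₀ ∧ τ₀ ≤ s ∧ τ₀ / s * ‖y‖ < r/2 := by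
      refine ⟨s * min 1 (r / (4 * (‖y‖ + 1))), by positivity, ?_, ?_⟩
      · exact mul_le_of_le_one_right hs.le (min_le_left _ _)
      · rw [mul_div_cancel_left₀ _ hs.ne']
        have hny := norm_nonneg y
        have h1 : min 1 (r / (4 * (‖y‖ + 1))) * ‖y‖ ≤ r / (4 * (‖y‖ + 1)) * ‖y‖ :=
          mul_le_mul_of_nonneg_right (min_le_right _ _) hny
        have h2 : r / (4 * (‖y‖ + 1)) * ‖y‖ < r/2 := by
          rw [div_mul_eq_mul_div, div_lt_iff₀ (by positivity)]
          nlinarith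
        linarith
    have hsub : closedBall (0 : En n) (r/2) ×ˢ Icc 0 τ₀ ⊆ closure V := by
      rintro ⟨x, t⟩ ⟨hx, ht⟩
      have hx' : ‖x‖ ≤ r/2 := by simpa using hx
      have ht0 : 0 ≤ t := ht.1
      have ht1 : t ≤ τ₀ := ht.2
      refine hcl ?_ ht0 (ht1.trans hτ₀s)
      have h1 := norm_sub_le x ((t / s) • y)
      have h2 : ‖(t / s) • y‖ ≤ τ₀ / s * ‖y‖ := by
        rw [norm_smul, Real.norm_of_nonneg (by positivity)]
        gcongr
      linarith
    have hcomp : IsCompact (closedBall (0 : En n) (r/2) ×ˢ Icc 0 τ₀) :=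
      (isCompact_closedBall _ _).prod isCompact_Icc
    have huc := hcomp.uniformContinuousOn_of_continuous (hu.cont.mono hsub)
    rw [Metric.uniformContinuousOn_iff] at huc
    obtain ⟨d, hd, hdd⟩ := huc γ hγ
    filter_upwards [Ioo_mem_nhdsGT (lt_min hτ₀ hd)] with τ hτ x hx
    have hτ1 : τ < τ₀ := hτ.2.trans_le (min_le_left _ _)
    have hτ2 : τ < d := hτ.2.trans_le (min_le_right _ _)
    have hxb : x ∈ closedBall (0 : En n) (r/2) := by simpa using hx
    have := hdd (x, τ) ⟨hxb, hτ.1.le, hτ1.le⟩ (x, 0) ⟨hxb, le_rfl, hτ₀.le⟩ (by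
      rw [Prod.dist_eq]
      simp only [dist_self, Real.dist_eq, sub_zero]
      rw [abs_of_pos hτ.1, max_eq_right hτ.1.le]
      exact hτ2)
    rw [Real.dist_eq] at this
    have h1 := hbase x (by rw [mem_ball_zero_iff]; linarith)
    linarith [(abs_lt.1 this).2]
  have hsmall : ∀ᶠ τ in 𝓝[>] (0:ℝ), 0 < τ ∧ 2 * τ < s ∧ τ / s * ‖y‖ < r/4 := by
    have hc1 : Tendsto (fun τ : ℝ => τ / s * ‖y‖) (𝓝[>] 0) (𝓝 0) := by
      have hcont : Continuous (fun τ : ℝ => τ / s * ‖y‖) := by fun_prop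
      have := hcont.tendsto 0
      simp only [zero_div, zero_mul] at this
      exact this.mono_left nhdsWithin_le_nhds
    filter_upwards [hc1.eventually (gt_mem_nhds (show 0 < r/4 by positivity)),
      Ioo_mem_nhdsGT (show 0 < s/2 by positivity)] with τ h1 h2
    exact ⟨h2.1, by linarith [h2.2], h1⟩
  have key : ∀ γ : ℝ, 0 < γ → u (y, s) ≤ (1 - δ^P) * M + 2 * γ := by
    intro γ hγ
    obtain ⟨τ, h1, h2, hτ, h2τ, hτy⟩ := ((hend γ hγ).and ((hstart γ hγ).and hsmall)).exists
    have hPpos : (0:ℝ) < P := by linarith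
    set Δ := (s - 2*τ) / P with hΔ
    have hΔpos : 0 < Δ := div_pos (by linarith) hPpos
    set ρ := Real.sqrt (Δ / T) with hρdef
    have hρ : 0 < ρ := Real.sqrt_pos.2 (by positivity)
    have hρ2 : ρ^2 * T = Δ := by
      rw [hρdef, Real.sq_sqrt (by positivity)]; field_simp
    have hPΔ : P * Δ = s - 2*τ := by rw [hΔ]; field_simp
    have hcρ : c * ρ ≤ r := by
      refine abs_le_of_sq_le_sq' ?_ hr.le |>.2
      -- `c²ρ² P T ≤ c² s ≤ c² K r² ≤ P T r²`
      have e1 : (c * ρ)^2 * (P * T) ≤ r^2 * (P * T) := by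
        have : (c * ρ)^2 * (P * T) = c^2 * (s - 2*τ) := by
          rw [← hPΔ, ← hρ2]; ring
        rw [this]
        have h3 : c^2 * (s - 2*τ) ≤ c^2 * (K * r^2) :=
          mul_le_mul_of_nonneg_left (by linarith) (sq_nonneg _)
        have h4 : (K * c^2) * r^2 ≤ (P * T) * r^2 := mul_le_mul_of_nonneg_right hPc (sq_nonneg _)
        nlinarith
      exact le_of_mul_le_mul_right e1 (by positivity)
    have h7 : 7 * ρ ≤ r := (mul_le_mul_of_nonneg_right hc7 hρ.le).trans hcρ
    have hKT : K * T * ρ ≤ r := (mul_le_mul_of_nonneg_right hcK hρ.le).trans hcρ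
    have hyρ : ‖y‖ * (ρ^2 * T) ≤ s * ρ := by
      have h3 : r * (‖y‖ * (ρ^2*T)) ≤ r * (s * ρ) := by
        have h4 : (r * ‖y‖) * (ρ^2*T) ≤ (K * s) * (ρ^2*T) :=
          mul_le_mul_of_nonneg_right hy' (by positivity)
        have h5 : (K * T * ρ) * (s * ρ) ≤ r * (s * ρ) :=
          mul_le_mul_of_nonneg_right hKT (by positivity)
        nlinarith
      exact le_of_mul_le_mul_left h3 hr
    have hIni : ∀ x, ‖x - (τ / s) • y‖ ≤ ρ → max (M - γ) 0 ≤ M - u (x, τ) := by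
      intro x hx
      have hn1 : ‖(τ / s) • y‖ < r/4 := by
        rw [norm_smul, Real.norm_of_nonneg (by positivity)]; exact hτy
      have hn2 : ‖x‖ ≤ ‖x - (τ / s) • y‖ + ‖(τ / s) • y‖ := by
        simpa using norm_add_le (x - (τ / s) • y) ((τ / s) • y)
      have h3 := h2 x (by linarith)
      have h4 : u (x, τ) ≤ M := hM _ (by
        rw [hV]
        exact ⟨by simp only; linarith, hτ, by simp only; linarith⟩)
      exact max_le (by linarith) (by linarith)
    have hfin := iterate_step (A := max (M - γ) 0) hδ hs hρ hT (le_max_right _ _) hV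
      (fun x₀ t₀ A hA hsub hi => hstep V u a b hVo huV ha hb hpde M hM x₀ ρ t₀ A hρ hA hsub hi)
      hyρ (by linarith) hτ P (by rw [hρ2, hPΔ]; linarith) hIni P le_rfl
      (((τ + P * (ρ^2*T)) / s) • y) (by simpa using hρ.le)
    have e3 : τ + P * (ρ^2*T) = s - τ := by rw [hρ2, hPΔ]; ring
    rw [e3] at hfin
    have h5 : δ^P * (M - γ) ≤ δ^P * max (M - γ) 0 :=
      mul_le_mul_of_nonneg_left (le_max_left _ _) hδP.le
    nlinarith
  refine le_of_forall_pos_le_add fun ε hε => ?_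
  have := key (ε/2) (by positivity)
  linarith

end Helpers

/-- **Slanted Cylinder Lemma** (Lemma 3.4). -/
theorem slanted_cylinder_lemma
    (n : ℕ) (hn : 0 < n) (ν K S : ℝ) (hν : 1 ≤ ν) (hK : 1 < K) :
    ∃ β₂ : ℝ, 0 < β₂ ∧ β₂ < 1 ∧
      ∀ (y : En n) (s r : ℝ) (u : En n × ℝ → ℝ)
        (a : En n × ℝ → Matrix (Fin n) (Fin n) ℝ) (b : En n × ℝ → En n),
        0 < s → 0 < r →
        K⁻¹ * r * ‖y‖ ≤ s → s ≤ K * r ^ 2 →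
        IsC21 u (closure (slantCyl (y, s) r)) →
        UnifParabolic ν a (slantCyl (y, s) r) →
        LxnLtinfPow b (slantCyl (y, s) r) ≤ ENNReal.ofReal S →
        (∀ X ∈ slantCyl (y, s) r, 0 ≤ -Dt u X + Lop a b u X) →
        (∀ x ∈ ball (0 : En n) r, u (x, 0) ≤ 0) →
        u (y, s) ≤ β₂ * supPos u (slantCyl (y, s) r) := by
  exact slanted_cylinder_aux n hn ν K S hν hK
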